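/- arXiv:1902.02899 — 2 statements merged into one kernel-verified Lean document; each statement's English description precedes it below -/
import Mathlib

section
/- There exists a function μ : ℛ → ℝ((X)) such that: (i) μ(g K_{i,j}) = (q³/((q²−1)(q−1))) · q^{−4i} · X^{4j} for every g ∈ GL_2(F) and every pair (i,j) > (0,0); (ii) μ is finitely additive, i.e. μ(A ∪ B) = μ(A) + μ(B) whenever A, B ∈ ℛ are disjoint; (iii) μ is left translation-invariant, i.e. μ(gA) = μ(A) for every g ∈ GL_2(F) and every A ∈ ℛ (left translates of members of ℛ lie in ℛ); and (iv) μ(K) = 1, where K = GL_2(O_F) belongs to ℛ. -/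
/-!
The measure is the restriction to indicator functions of a linear functional on real functions
on `GL₂(F)`. Distinguished sets are left cosets of a chain of subgroups `K_{i,j}`, so two of them
are nested or disjoint; hence the span of their indicators is closed under products and contains
the indicator of every member of `ℛ` (`indicator_mem_stepSpace`). Additivity is then linearity,
and left invariance only has to be checked on distinguished sets.

The functional exists as soon as every linear relation between indicators of left cosets is also
satisfied by the prescribed values (`weight_relation`). In such a relation consider the largest
subgroup `A` that occurs and the next one `B`. If `B` has finite index in `A`, cosets of `A` are
split into cosets of `B`, which respects the values because they are multiplied by the index.
If the index is infinite, no coset of `A` is covered by the finitely many cosets of `B` containing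
all remaining terms, so all coefficients at cosets of `A` vanish. Either way one subgroup fewer
occurs.

The indices are as required: `g ↦ g - 1` identifies `K_a / K_b` with `2 × 2` matrices over the
quotient of two fractional ideals (`IsScale.relIndex_congSubgroup`), which gives `q ^ (4 n)` from
`(i, j)` to `(i + n, j)` and infinite index when `j` changes. The group `GL₂(O)` is treated as one
more member of the chain, of value `1`; it contains `K_{1,0}` with index
`|GL₂(𝔽_q)| = (q² - 1)(q² - q)`, and this matches the constant `q³ / ((q² - 1)(q - 1))`.
-/

open Matrix

noncomputable section

/-- The lexicographic-from-the-right (non-strict) order on `ℤ × ℤ`: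
`(i,j) ≤ (m,n)` iff `j < n`, or `j = n` and `i ≤ m`. -/
def RLex (a b : ℤ × ℤ) : Prop := a.2 < b.2 ∨ (a.2 = b.2 ∧ a.1 ≤ b.1)

/-- The lexicographic-from-the-right strict order on `ℤ × ℤ`:
`(i,j) < (m,n)` iff `j < n`, or `j = n` and `i < m`. -/
def RLt (a b : ℤ × ℤ) : Prop := a.2 < b.2 ∨ (a.2 = b.2 ∧ a.1 < b.1)

/-- The left translate `g • A` of a subset `A` of a group. -/
def lmul {G : Type*} [Group G] (g : G) (A : Set G) : Set G := (fun x => g * x) '' A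

/-- The set `K_{i,j} = I₂ + t₁^i t₂^j M₂(O_F)` inside `GL₂(F)` (a subgroup when
`(i,j) > (0,0)`). -/
def Kmat {F : Type*} [Field F] (O : Subring F) (t1 t2 : F) (i j : ℤ) :
    Set (GL (Fin 2) F) :=
  {g | ∀ a b : Fin 2, ∃ c ∈ O,
    (g : Matrix (Fin 2) (Fin 2) F) a b
      = (1 : Matrix (Fin 2) (Fin 2) F) a b + t1 ^ i * t2 ^ j * c}

/-- Distinguished subsets of `GL₂(F)`: the empty set and the left cosets `g K_{i,j}`
with `(i,j) > (0,0)`. -/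
def Dist2 {F : Type*} [Field F] (O : Subring F) (t1 t2 : F)
    (D : Set (GL (Fin 2) F)) : Prop :=
  D = ∅ ∨ ∃ (g : GL (Fin 2) F) (i j : ℤ), RLt (0, 0) (i, j) ∧ D = lmul g (Kmat O t1 t2 i j)

/-- The ring `ℛ` of subsets of `GL₂(F)`: the smallest collection containing all
distinguished sets and closed under binary unions, intersections and differences. -/
inductive RMem {F : Type*} [Field F] (O : Subring F) (t1 t2 : F) :
    Set (GL (Fin 2) F) → Prop
  | dist (D : Set (GL (Fin 2) F)) : Dist2 O t1 t2 D → RMem O t1 t2 D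
  | union (A B : Set (GL (Fin 2) F)) : RMem O t1 t2 A → RMem O t1 t2 B → RMem O t1 t2 (A ∪ B)
  | inter (A B : Set (GL (Fin 2) F)) : RMem O t1 t2 A → RMem O t1 t2 B → RMem O t1 t2 (A ∩ B)
  | diff (A B : Set (GL (Fin 2) F)) : RMem O t1 t2 A → RMem O t1 t2 B → RMem O t1 t2 (A \ B)

/-- The set `K = GL₂(O_F)`: matrices whose entries, together with the entries of the
inverse matrix, lie in the rank-two ring of integers `O_F`. -/
def GLO {F : Type*} [Field F] (O : Subring F) : Set (GL (Fin 2) F) :=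
  {g | (∀ a b : Fin 2, (g : Matrix (Fin 2) (Fin 2) F) a b ∈ O) ∧
    ∀ a b : Fin 2, ((g⁻¹ : GL (Fin 2) F) : Matrix (Fin 2) (Fin 2) F) a b ∈ O}


/-! ### Cosets of a chain of subgroups -/

section Abstract

variable {G ι V : Type*} [Group G] [LinearOrder ι] [AddCommGroup V] [Module ℝ V]

/-- For `B` of finite index in `A`, a finitely supported function on `G ⧸ A` pulls back to a
finitely supported function on `G ⧸ B`, and its sum of values is multiplied by the index. -/
lemma exists_pullback (A B : Subgroup G) (hBA : B ≤ A) (hn : B.relIndex A ≠ 0)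
    (d : (G ⧸ A) →₀ ℝ) :
    ∃ d' : (G ⧸ B) →₀ ℝ, (∀ x : G, d' (x : G ⧸ B) = d (x : G ⧸ A)) ∧
      d'.sum (fun _ r => r) = (B.relIndex A : ℝ) * d.sum (fun _ r => r) := by
  classical
  let e := Subgroup.quotientEquivProdOfLE hBA
  have hfin : Finite (A ⧸ B.subgroupOf A) := Nat.finite_of_card_ne_zero hn
  have := Fintype.ofFinite (A ⧸ B.subgroupOf A)
  let dp : ((G ⧸ A) × (A ⧸ B.subgroupOf A)) →₀ ℝ :=
    Finsupp.onFinset (d.support ×ˢ Finset.univ) (fun p => d p.1) (by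
      intro p hp; simpa using hp)
  refine ⟨Finsupp.equivMapDomain e.symm dp, fun x => ?_, ?_⟩
  · rfl
  · rw [Finsupp.equivMapDomain_eq_mapDomain, Finsupp.sum_mapDomain_index (by simp) (by simp)]
    rw [Finsupp.onFinset_sum _ (by simp), Finset.sum_product]
    have hc : (B.relIndex A : ℝ) = (Fintype.card (A ⧸ B.subgroupOf A) : ℝ) := by
      rw [← Nat.card_eq_fintype_card]; rfl
    simp [Finsupp.sum, hc, Finset.mul_sum]

/-- For a decreasing chain of subgroups `K a` with weights multiplicative along finite indices,
any linear relation between indicator functions of left cosets (recorded by the coefficients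
`d a` on `G ⧸ K a`) is also satisfied by the weights. The largest subgroup is either refined into
the next one, when the index is finite, or all its coefficients vanish, because a coset of it is
not covered by finitely many cosets of the next one. -/
lemma weight_relation (K : ι → Subgroup G) (hK : Antitone K) (w : ι → V)
    (hw : ∀ a b, a ≤ b → (K b).relIndex (K a) ≠ 0 → w a = ((K b).relIndex (K a) : ℝ) • w b)
    (s : Finset ι) : ∀ d : (∀ a, (G ⧸ K a) →₀ ℝ),
      (∀ x : G, ∑ a ∈ s, d a (x : G ⧸ K a) = 0) →
      ∑ a ∈ s, ((d a).sum fun _ r => r) • w a = 0 := by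
  classical
  induction s using Finset.induction_on_min with
  | empty => simp
  | insert a s has ih =>
    intro d hd
    have hna : a ∉ s := fun h => lt_irrefl _ (has a h)
    simp only [Finset.sum_insert hna] at hd ⊢
    rcases s.eq_empty_or_nonempty with rfl | hs
    · have : d a = 0 := by
        ext y
        induction y using QuotientGroup.induction_on with
        | H x => simpa using hd x
      simp [this]
    set b := s.min' hs with hb
    have hbs : b ∈ s := s.min'_mem hs
    have hab : a ≤ b := (has b hbs).le
    by_cases hn : (K b).relIndex (K a) = 0
    · have h0 : d a = 0 := by
        ext y
        induction y using QuotientGroup.induction_on with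
        | H x =>
        by_contra hne
        have hne : d a (x : G ⧸ K a) ≠ 0 := hne
        -- finitely many cosets of `K b` contain the supports of all other terms
        let S : Set (G ⧸ K b) := ⋃ c ∈ s, {z | ∃ g : G, (g : G ⧸ K b) = z ∧ d c (g : G ⧸ K c) ≠ 0}
        have hS : S.Finite := by
          refine Set.Finite.biUnion s.finite_toSet fun c hc => ?_
          have hbc : K c ≤ K b := hK (s.min'_le c hc)
          refine ((d c).support.finite_toSet.image (Subgroup.quotientMapOfLE hbc)).subset ?_
          rintro _ ⟨g, rfl, hg⟩
          exact ⟨(g : G ⧸ K c), by simpa using hg, rfl⟩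
        have hmem : ∀ k ∈ K a, ((x * k : G) : G ⧸ K b) ∈ S := by
          intro k hk
          have h1 := hd (x * k)
          have h2 : ((x * k : G) : G ⧸ K a) = (x : G ⧸ K a) := by
            rw [eq_comm, QuotientGroup.eq]; simpa using hk
          rw [h2] at h1
          have h3 : ∑ c ∈ s, d c ((x * k : G) : G ⧸ K c) ≠ 0 := by
            intro h; rw [h, add_zero] at h1; exact hne h1
          obtain ⟨c, hc, hc'⟩ := Finset.exists_ne_zero_of_sum_ne_zero h3
          exact Set.mem_biUnion hc ⟨x * k, rfl, hc'⟩
        have := hS.to_subtype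
        let f : (K a ⧸ (K b).subgroupOf (K a)) → S := fun z =>
          ⟨((x * (z.out : G) : G) : G ⧸ K b), hmem _ z.out.2⟩
        have hf : Function.Injective f := by
          intro z z' h
          have h := congrArg Subtype.val h
          simp only [f] at h
          rw [QuotientGroup.eq] at h
          rw [← QuotientGroup.out_eq' z, ← QuotientGroup.out_eq' z', QuotientGroup.eq]
          rw [Subgroup.mem_subgroupOf]
          simpa [mul_assoc] using h
        have := Finite.of_injective f hf
        have h5 : Nat.card (K a ⧸ (K b).subgroupOf (K a)) ≠ 0 := Nat.card_pos.ne'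
        exact h5 hn
      have := ih d (fun x => by simpa [h0] using hd x)
      simp [h0, this]
    · obtain ⟨d', hd', hsum⟩ := exists_pullback (K a) (K b) (hK hab) hn (d a)
      have key := ih (Function.update d b (d b + d')) (fun x => by
        rw [← hd x, ← Finset.add_sum_erase _ _ hbs, ← Finset.add_sum_erase s _ hbs,
          Function.update_self, Finsupp.add_apply, hd', add_comm (d b _), add_assoc]
        congr 2
        refine Finset.sum_congr rfl fun c hc => ?_
        rw [Function.update_of_ne (Finset.ne_of_mem_erase hc)])
      rw [← key, ← Finset.add_sum_erase _ _ hbs, ← Finset.add_sum_erase s _ hbs,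
          Function.update_self, Finsupp.sum_add_index' (by simp) (by simp), hsum, hw a b hab hn,
          ← add_assoc]
      congr 1
      · module
      · refine Finset.sum_congr rfl fun c hc => ?_
        rw [Function.update_of_ne (Finset.ne_of_mem_erase hc)]

/-- The weights extend to a linear functional on all real functions on `G`, taking the value `w a`
at the indicator function of every left coset of `K a`. -/
lemma exists_functional (K : ι → Subgroup G) (hK : Antitone K) (w : ι → V)
    (hw : ∀ a b, a ≤ b → (K b).relIndex (K a) ≠ 0 → w a = ((K b).relIndex (K a) : ℝ) • w b) :
    ∃ L : (G → ℝ) →ₗ[ℝ] V, ∀ (g : G) (a : ι),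
      L (((fun x => g * x) '' (K a : Set G)).indicator 1) = w a := by
  classical
  let Φ : ((Σ a, G ⧸ K a) →₀ ℝ) →ₗ[ℝ] (G → ℝ) :=
    Finsupp.linearCombination ℝ (fun p x => if (x : G ⧸ K p.1) = p.2 then 1 else 0)
  let W : ((Σ a, G ⧸ K a) →₀ ℝ) →ₗ[ℝ] V := Finsupp.linearCombination ℝ (fun p => w p.1)
  have hker : LinearMap.ker Φ ≤ LinearMap.ker W := by
    intro m hm
    rw [LinearMap.mem_ker] at hm ⊢
    have := weight_relation K hK w hw (m.support.image Sigma.fst) (fun a => m.split a) (by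
      intro x
      have h := congrFun hm x
      simp only [Φ, Finsupp.linearCombination_apply, Finsupp.sum, Finset.sum_apply,
        Pi.smul_apply, Pi.zero_apply, smul_eq_mul, mul_ite, mul_one, mul_zero] at h
      rw [← h, ← Finset.sum_fiberwise_of_maps_to
        (fun p hp => Finset.mem_image_of_mem Sigma.fst hp)]
      refine Finset.sum_congr rfl fun a _ => ?_
      rw [Finsupp.split_apply]
      by_cases hmx : m ⟨a, (x : G ⧸ K a)⟩ = 0
      · rw [hmx, eq_comm]
        refine Finset.sum_eq_zero ?_
        rintro ⟨c, y⟩ hc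
        simp only [Finset.mem_filter] at hc
        obtain ⟨-, rfl⟩ := hc
        split_ifs with h1
        · simp only at h1; rw [← h1]; exact hmx
        · rfl
      · rw [Finset.sum_eq_single ⟨a, (x : G ⧸ K a)⟩]
        · simp
        · rintro ⟨c, y⟩ hc hne
          simp only [Finset.mem_filter] at hc
          obtain ⟨-, rfl⟩ := hc
          rw [if_neg]
          intro h1
          exact hne (by simp only at h1; rw [h1])
        · intro h1; simp [hmx] at h1)
    rw [← this]
    simp only [W, Finsupp.linearCombination_apply]
    rw [Finsupp.sum, ← Finset.sum_fiberwise_of_maps_to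
        (fun p hp => Finset.mem_image_of_mem Sigma.fst hp)]
    refine Finset.sum_congr rfl fun a _ => ?_
    rw [Finsupp.sum, Finset.sum_smul]
    symm
    refine Finset.sum_bij (fun y _ => (⟨a, y⟩ : Σ a, G ⧸ K a)) ?_ ?_ ?_ ?_
    · intro y hy; simpa [Finsupp.split_apply] using hy
    · intro y _ z _ h; simpa using h
    · rintro ⟨c, y⟩ hc
      simp only [Finset.mem_filter] at hc
      obtain ⟨h1, rfl⟩ := hc
      exact ⟨y, by simpa [Finsupp.split_apply] using h1, rfl⟩
    · intro y hy; rfl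
  obtain ⟨L, hL⟩ := LinearMap.exists_extend
    (((LinearMap.ker Φ).liftQ W hker).comp Φ.quotKerEquivRange.symm.toLinearMap)
  refine ⟨L, fun g a => ?_⟩
  let m : (Σ a, G ⧸ K a) →₀ ℝ := Finsupp.single ⟨a, (g : G ⧸ K a)⟩ 1
  have h1 : ((fun x => g * x) '' (K a : Set G)).indicator 1 = Φ m := by
    funext x
    simp only [Φ, m, Finsupp.linearCombination_single, one_smul]
    rw [Set.indicator_apply]
    refine if_congr ?_ rfl rfl
    rw [eq_comm, QuotientGroup.eq]
    constructor
    · rintro ⟨k, hk, rfl⟩; simpa using hk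
    · intro h; exact ⟨g⁻¹ * x, h, by simp⟩
  have h2 := LinearMap.congr_fun hL ⟨Φ m, LinearMap.mem_range_self Φ m⟩
  rw [h1]
  refine h2.trans ?_
  have h3 : Φ.quotKerEquivRange.symm ⟨Φ m, LinearMap.mem_range_self Φ m⟩
      = (LinearMap.ker Φ).mkQ m := LinearMap.quotKerEquivRange_symm_apply_image Φ m _
  simp only [LinearMap.comp_apply, LinearEquiv.coe_coe]
  rw [h3]
  simp [W, m]

end Abstract

/-! ### Fractional ideals and their indices -/

section Lattices

variable {F : Type*} [Field F]

/-- A family `T p`, `p ∈ ℤ × ℤ` (ordered with the first coordinate dominant), of representatives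
of the value group of `O`: it is multiplicative, `T p` is integral exactly for `p ≥ 0`, and every
nonzero element of `F` is a unit of `O` times some `T p`. -/
structure IsScale (O : Subring F) (T : ℤ ×ₗ ℤ → F) : Prop where
  ne_zero : ∀ p, T p ≠ 0
  map_add : ∀ a b, T (a + b) = T a * T b
  mem_iff : ∀ p, T p ∈ O ↔ 0 ≤ p
  exists_unit : ∀ x : F, x ≠ 0 → ∃ p u, u ∈ O ∧ u⁻¹ ∈ O ∧ x = u * T p

/-- The least positive element of `ℤ × ℤ` with the first coordinate dominant. -/
def eOne : ℤ ×ₗ ℤ := toLex (0, 1)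

/-- The fractional ideal `T a · O` of `F`. -/
def fracIdeal (O : Subring F) (T : ℤ ×ₗ ℤ → F) (a : ℤ ×ₗ ℤ) : AddSubgroup F :=
  O.toAddSubgroup.map (AddMonoidHom.mulLeft (T a))

lemma mem_fracIdeal {O : Subring F} {T : ℤ ×ₗ ℤ → F} {a : ℤ ×ₗ ℤ} {x : F} :
    x ∈ fracIdeal O T a ↔ ∃ c ∈ O, T a * c = x := Iff.rfl

lemma smul_mem_fracIdeal {O : Subring F} {T : ℤ ×ₗ ℤ → F} {a : ℤ ×ₗ ℤ} {c x : F} (hc : c ∈ O)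
    (hx : x ∈ fracIdeal O T a) : c * x ∈ fracIdeal O T a := by
  obtain ⟨y, hy, rfl⟩ := hx
  exact ⟨c * y, O.mul_mem hc hy, by simp only [AddMonoidHom.coe_mulLeft]; ring⟩

lemma eOne_pos : 0 < eOne := by
  rw [Prod.Lex.lt_iff]; right; exact ⟨rfl, by decide⟩

lemma eOne_le_of_pos {p : ℤ ×ₗ ℤ} (hp : 0 < p) : eOne ≤ p := by
  rw [Prod.Lex.lt_iff] at hp
  rw [Prod.Lex.le_iff]
  change (0 : ℤ) < _ ∨ (0 : ℤ) = _ ∧ (0 : ℤ) < _ at hp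
  change (0 : ℤ) < _ ∨ (0 : ℤ) = _ ∧ (1 : ℤ) ≤ _
  omega

namespace IsScale

variable {O : Subring F} {T : ℤ ×ₗ ℤ → F}

lemma map_zero (h : IsScale O T) : T 0 = 1 := by
  have := h.map_add 0 0
  rw [add_zero] at this
  exact (mul_eq_left₀ (h.ne_zero 0)).mp this.symm

lemma map_neg (h : IsScale O T) (a : ℤ ×ₗ ℤ) : T (-a) = (T a)⁻¹ := by
  refine eq_inv_of_mul_eq_one_left ?_
  rw [← h.map_add, neg_add_cancel, h.map_zero]

lemma fracIdeal_zero (h : IsScale O T) : fracIdeal O T 0 = O.toAddSubgroup := by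
  ext x
  simp [mem_fracIdeal, h.map_zero]

lemma fracIdeal_add (h : IsScale O T) (a b : ℤ ×ₗ ℤ) :
    fracIdeal O T (a + b) = (fracIdeal O T b).map (AddMonoidHom.mulLeft (T a)) := by
  ext x
  constructor
  · rintro ⟨c, hc, rfl⟩
    exact ⟨T b * c, ⟨c, hc, rfl⟩, by simp [h.map_add, mul_assoc]⟩
  · rintro ⟨_, ⟨c, hc, rfl⟩, rfl⟩
    exact ⟨c, hc, by simp [h.map_add, mul_assoc]⟩

lemma antitone_fracIdeal (h : IsScale O T) : Antitone (fracIdeal O T) := by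
  rintro a b hab _ ⟨c, hc, rfl⟩
  refine ⟨T (b - a) * c, O.mul_mem ((h.mem_iff _).2 (sub_nonneg.2 hab)) hc, ?_⟩
  simp only [AddMonoidHom.coe_mulLeft]
  rw [← mul_assoc, ← h.map_add, add_sub_cancel]

lemma fracIdeal_le (h : IsScale O T) {a : ℤ ×ₗ ℤ} (ha : 0 ≤ a) {x : F}
    (hx : x ∈ fracIdeal O T a) : x ∈ O := by
  have := h.antitone_fracIdeal ha hx
  rwa [h.fracIdeal_zero] at this

lemma mem_maximalIdeal [IsLocalRing O] (h : IsScale O T) (x : O) :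
    x ∈ IsLocalRing.maximalIdeal O ↔ (x : F) ∈ fracIdeal O T eOne := by
  have hT1 : T eOne ∈ O := (h.mem_iff _).2 eOne_pos.le
  constructor
  · intro hx
    by_cases hx0 : (x : F) = 0
    · rw [hx0]; exact zero_mem _
    obtain ⟨p, u, hu, hu', hxp⟩ := h.exists_unit x hx0
    have hu0 : u ≠ 0 := by rintro rfl; simp [hxp] at hx0
    have hTp : T p ∈ O := by
      have : T p = u⁻¹ * x := by rw [hxp]; field_simp
      rw [this]; exact O.mul_mem hu' x.2
    have hp0 : 0 ≤ p := (h.mem_iff p).1 hTp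
    have hp : 0 < p := by
      refine lt_of_le_of_ne hp0 ?_
      rintro rfl
      rw [h.map_zero, mul_one] at hxp
      refine (IsLocalRing.mem_maximalIdeal x).1 hx ?_
      refine IsUnit.of_mul_eq_one (⟨u⁻¹, hu'⟩ : O) (Subtype.ext ?_)
      simp [hxp, hu0]
    refine h.antitone_fracIdeal (eOne_le_of_pos hp) ⟨u, hu, ?_⟩
    simp [hxp, mul_comm]
  · rintro ⟨c, hc, hcx⟩
    have : x = ⟨T eOne, hT1⟩ * ⟨c, hc⟩ := Subtype.ext hcx.symm
    rw [this]
    refine Ideal.mul_mem_right _ _ ?_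
    rw [IsLocalRing.mem_maximalIdeal, mem_nonunits_iff]
    intro hunit
    obtain ⟨y, hy⟩ := hunit.exists_right_inv
    have hy' : T eOne * (y : F) = 1 := congrArg Subtype.val hy
    have : T (-eOne) ∈ O := by
      rw [h.map_neg, ← eq_inv_of_mul_eq_one_right hy']; exact y.2
    have := (h.mem_iff _).1 this
    exact absurd eOne_pos (not_lt.2 (neg_nonneg.1 this))

/-- An element congruent to `1` modulo a proper ideal `T a · O` is a unit of `O`. -/
lemma inv_mem [IsLocalRing O] (h : IsScale O T) {a : ℤ ×ₗ ℤ} (ha : 0 < a) {x : F}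
    (hx : x - 1 ∈ fracIdeal O T a) : x ≠ 0 ∧ x⁻¹ ∈ O := by
  have hxO : x - 1 ∈ O := h.fracIdeal_le ha.le hx
  have hm : (⟨x - 1, hxO⟩ : O) ∈ IsLocalRing.maximalIdeal O :=
    (h.mem_maximalIdeal _).2 (h.antitone_fracIdeal (eOne_le_of_pos ha) hx)
  have hu : IsUnit (1 + ⟨x - 1, hxO⟩ : O) := by
    by_contra hc
    have h1 : (1 + ⟨x - 1, hxO⟩ : O) ∈ IsLocalRing.maximalIdeal O := hc
    have h2 := sub_mem h1 hm
    rw [add_sub_cancel_right] at h2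
    exact (Ideal.ne_top_iff_one _).1 (IsLocalRing.maximalIdeal.isMaximal O).ne_top h2
  obtain ⟨y, hy⟩ := hu.exists_right_inv
  have hy' : x * (y : F) = 1 := by
    have := congrArg Subtype.val hy
    simpa using this
  refine ⟨left_ne_zero_of_mul_eq_one hy', ?_⟩
  rw [← eq_inv_of_mul_eq_one_right hy']
  exact y.2

lemma relIndex_succ [IsLocalRing O] (h : IsScale O T) (a : ℤ ×ₗ ℤ) :
    (fracIdeal O T (a + eOne)).relIndex (fracIdeal O T a)
      = Nat.card (IsLocalRing.ResidueField O) := by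
  have h0 : fracIdeal O T a = (fracIdeal O T 0).map (AddMonoidHom.mulLeft (T a)) := by
    rw [← h.fracIdeal_add, add_zero]
  rw [h.fracIdeal_add, h0, AddSubgroup.relIndex_map_map_of_injective _ _
    (mul_right_injective₀ (h.ne_zero a)), h.fracIdeal_zero]
  have : (fracIdeal O T eOne).addSubgroupOf O.toAddSubgroup
      = (IsLocalRing.maximalIdeal O).toAddSubgroup := by
    ext x
    exact (h.mem_maximalIdeal x).symm
  rw [AddSubgroup.relIndex, this]
  rfl

lemma relIndex_nsmul [IsLocalRing O] (h : IsScale O T) (a : ℤ ×ₗ ℤ) (n : ℕ) :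
    (fracIdeal O T (a + n • eOne)).relIndex (fracIdeal O T a)
      = Nat.card (IsLocalRing.ResidueField O) ^ n := by
  induction n with
  | zero => simp
  | succ n ih =>
    rw [succ_nsmul, ← add_assoc, pow_succ', ← ih, ← h.relIndex_succ (a + n • eOne)]
    refine (AddSubgroup.relIndex_mul_relIndex _ _ _ ?_ ?_).symm
    · exact h.antitone_fracIdeal (le_add_of_nonneg_right eOne_pos.le)
    · exact h.antitone_fracIdeal (le_add_of_nonneg_right (nsmul_nonneg eOne_pos.le n))

/-- The index is infinite as soon as the dominant coordinates differ: in between lie ideals of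
index `q ^ n` for every `n`. -/
lemma relIndex_eq_zero [IsLocalRing O] [Finite (IsLocalRing.ResidueField O)] (h : IsScale O T)
    {a b : ℤ ×ₗ ℤ} (hab : (ofLex a).1 < (ofLex b).1) :
    (fracIdeal O T b).relIndex (fracIdeal O T a) = 0 := by
  by_contra hne
  set r := (fracIdeal O T b).relIndex (fracIdeal O T a) with hr
  have hq : 1 < Nat.card (IsLocalRing.ResidueField O) := Finite.one_lt_card
  have hdvd : Nat.card (IsLocalRing.ResidueField O) ^ r ∣ r := by
    rw [← h.relIndex_nsmul a r]
    conv_rhs => rw [hr]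
    rw [← AddSubgroup.relIndex_mul_relIndex (fracIdeal O T b) (fracIdeal O T (a + r • eOne))
      (fracIdeal O T a)]
    · exact Dvd.intro_left _ rfl
    · refine h.antitone_fracIdeal ?_
      rw [Prod.Lex.le_iff]
      left
      simpa [eOne] using hab
    · exact h.antitone_fracIdeal (le_add_of_nonneg_right (nsmul_nonneg eOne_pos.le r))
  exact absurd (Nat.le_of_dvd (Nat.pos_of_ne_zero hne) hdvd) (not_le.2 (Nat.lt_pow_self hq))

end IsScale

end Lattices

/-! ### Congruence subgroups and their indices -/

section Congruence

variable {F : Type*} [Field F] {O : Subring F} {T : ℤ ×ₗ ℤ → F}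

lemma mul_entry_mem_fracIdeal {a : ℤ ×ₗ ℤ} {A B : Matrix (Fin 2) (Fin 2) F}
    (hA : ∀ r s, A r s ∈ O) (hB : ∀ r s, B r s ∈ fracIdeal O T a) (r s : Fin 2) :
    (A * B) r s ∈ fracIdeal O T a := by
  rw [Matrix.mul_apply]
  exact sum_mem fun k _ => smul_mem_fracIdeal (hA r k) (hB k s)

lemma mul_entry_mem {A B : Matrix (Fin 2) (Fin 2) F}
    (hA : ∀ r s, A r s ∈ O) (hB : ∀ r s, B r s ∈ O) (r s : Fin 2) : (A * B) r s ∈ O := by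
  rw [Matrix.mul_apply]
  exact sum_mem fun k _ => O.mul_mem (hA r k) (hB k s)

/-- The congruence subgroup of `GL₂(O)` of matrices congruent to `1` modulo `T a · O`. For `a = 0`
this is `GL₂(O)` itself. -/
def congSubgroup (O : Subring F) (T : ℤ ×ₗ ℤ → F) (a : ℤ ×ₗ ℤ) : Subgroup (GL (Fin 2) F) where
  carrier := {g | g ∈ GLO O ∧
    ∀ r s, ((g : Matrix (Fin 2) (Fin 2) F) - 1) r s ∈ fracIdeal O T a}
  one_mem' := by
    refine ⟨⟨by simp, by simp⟩, fun r s => ?_⟩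
    simp [zero_mem]
  mul_mem' := by
    rintro g k ⟨⟨hg, hg'⟩, hgP⟩ ⟨⟨hk, hk'⟩, hkP⟩
    refine ⟨⟨?_, ?_⟩, ?_⟩
    · rw [Units.val_mul]; exact mul_entry_mem hg hk
    · rw [_root_.mul_inv_rev, Units.val_mul]; exact mul_entry_mem hk' hg'
    · intro r s
      have : ((g * k : GL (Fin 2) F) : Matrix (Fin 2) (Fin 2) F) - 1
          = (g : Matrix (Fin 2) (Fin 2) F) * ((k : Matrix (Fin 2) (Fin 2) F) - 1)
            + ((g : Matrix (Fin 2) (Fin 2) F) - 1) := by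
        rw [Units.val_mul]; noncomm_ring
      rw [this, Matrix.add_apply]
      exact add_mem (mul_entry_mem_fracIdeal hg hkP r s) (hgP r s)
  inv_mem' := by
    rintro g ⟨⟨hg, hg'⟩, hgP⟩
    refine ⟨⟨hg', by simpa using hg⟩, fun r s => ?_⟩
    have : ((g⁻¹ : GL (Fin 2) F) : Matrix (Fin 2) (Fin 2) F) - 1
        = -(((g⁻¹ : GL (Fin 2) F) : Matrix (Fin 2) (Fin 2) F)
            * ((g : Matrix (Fin 2) (Fin 2) F) - 1)) := by
      rw [mul_sub, Units.inv_mul]; noncomm_ring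
    rw [this, Matrix.neg_apply]
    exact neg_mem (mul_entry_mem_fracIdeal hg' hgP r s)

lemma mem_congSubgroup {a : ℤ ×ₗ ℤ} {g : GL (Fin 2) F} :
    g ∈ congSubgroup O T a ↔ g ∈ GLO O ∧
      ∀ r s, ((g : Matrix (Fin 2) (Fin 2) F) - 1) r s ∈ fracIdeal O T a := Iff.rfl

/-- Left cosets of congruence subgroups of `GL₂(O)` are described by entrywise congruences. -/
lemma inv_mul_mem_congSubgroup {a : ℤ ×ₗ ℤ} {g k : GL (Fin 2) F} (hg : g ∈ GLO O)
    (hk : k ∈ GLO O) : g⁻¹ * k ∈ congSubgroup O T a ↔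
      ∀ r s, (k : Matrix (Fin 2) (Fin 2) F) r s - (g : Matrix (Fin 2) (Fin 2) F) r s
        ∈ fracIdeal O T a := by
  constructor
  · rintro ⟨-, h⟩ r s
    have h1 := mul_entry_mem_fracIdeal hg.1 h r s
    rw [Units.val_mul, mul_sub, ← mul_assoc, Units.mul_inv] at h1
    simpa using h1
  · intro h
    refine ⟨⟨?_, ?_⟩, fun r s => ?_⟩
    · rw [Units.val_mul]; exact mul_entry_mem hg.2 hk.1
    · rw [_root_.mul_inv_rev, inv_inv, Units.val_mul]; exact mul_entry_mem hk.2 hg.1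
    · have h1 := mul_entry_mem_fracIdeal (B := (k : Matrix (Fin 2) (Fin 2) F) - (g : Matrix (Fin 2) (Fin 2) F)) hg.2
        (fun r s => h r s) r s
      rw [mul_sub, Units.inv_mul] at h1
      rwa [Units.val_mul]

lemma relIndex_eq_card {G X : Type*} [Group G] (H A : Subgroup G) (f : A → X)
    (hf : Function.Surjective f) (h : ∀ g k : A, f g = f k ↔ (g : G)⁻¹ * k ∈ H) :
    H.relIndex A = Nat.card X := by
  refine Nat.card_congr (Equiv.ofBijective
    (Quotient.lift f fun g k hgk => (h g k).2 ?_) ⟨?_, ?_⟩)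
  · exact QuotientGroup.leftRel_apply (s := H.subgroupOf A).1 hgk
  · rintro ⟨g⟩ ⟨k⟩ hgk
    exact Quotient.sound (QuotientGroup.leftRel_apply.2 ((h g k).1 hgk))
  · intro x
    obtain ⟨g, rfl⟩ := hf x
    exact ⟨⟦g⟧, rfl⟩

lemma mem_GLO_of_det {g : GL (Fin 2) F} (hg : ∀ r s, (g : Matrix (Fin 2) (Fin 2) F) r s ∈ O)
    (hdet : ((g : Matrix (Fin 2) (Fin 2) F).det)⁻¹ ∈ O) : g ∈ GLO O := by
  refine ⟨hg, fun r s => ?_⟩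
  rw [Matrix.coe_units_inv, Matrix.inv_def, Matrix.smul_apply, smul_eq_mul, Ring.inverse_eq_inv',
    Matrix.adjugate_fin_two]
  refine O.mul_mem hdet ?_
  fin_cases r <;> fin_cases s <;> simp [hg]

namespace IsScale

lemma antitone_congSubgroup (h : IsScale O T) : Antitone (congSubgroup O T) :=
  fun _ _ hab _ hg => ⟨hg.1, fun r s => h.antitone_fracIdeal hab (hg.2 r s)⟩

lemma coe_congSubgroup_zero (h : IsScale O T) :
    (congSubgroup O T 0 : Set (GL (Fin 2) F)) = GLO O := by
  ext g
  refine ⟨fun hg => hg.1, fun hg => ⟨hg, fun r s => ?_⟩⟩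
  rw [h.fracIdeal_zero, Matrix.sub_apply]
  refine O.sub_mem (hg.1 r s) ?_
  rw [Matrix.one_apply]
  split_ifs
  exacts [O.one_mem, O.zero_mem]

lemma entry_mem (h : IsScale O T) {a : ℤ ×ₗ ℤ} (ha : 0 < a)
    {M : Matrix (Fin 2) (Fin 2) F} (hM : ∀ r s, (M - 1) r s ∈ fracIdeal O T a) (r s : Fin 2) :
    M r s ∈ O := by
  have h1 : (1 : Matrix (Fin 2) (Fin 2) F) r s ∈ O := by
    rw [Matrix.one_apply]
    split_ifs
    exacts [O.one_mem, O.zero_mem]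
  have := O.add_mem (h.fracIdeal_le ha.le (hM r s)) h1
  simpa using this

variable [IsLocalRing O]

lemma det_unit (h : IsScale O T) {a : ℤ ×ₗ ℤ} (ha : 0 < a)
    {M : Matrix (Fin 2) (Fin 2) F} (hM : ∀ r s, (M - 1) r s ∈ fracIdeal O T a) :
    M.det ≠ 0 ∧ M.det⁻¹ ∈ O := by
  refine h.inv_mem ha ?_
  have e : M.det - 1 = M 0 0 * (M - 1) 1 1 + (M - 1) 0 0 - M 0 1 * (M - 1) 1 0 := by
    rw [Matrix.det_fin_two]; simp; ring
  rw [e]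
  have hO := h.entry_mem ha hM
  exact sub_mem (add_mem (smul_mem_fracIdeal (hO 0 0) (hM 1 1)) (hM 0 0))
    (smul_mem_fracIdeal (hO 0 1) (hM 1 0))

lemma mem_congSubgroup_of_pos (h : IsScale O T) {a : ℤ ×ₗ ℤ} (ha : 0 < a) {g : GL (Fin 2) F}
    (hg : ∀ r s, ((g : Matrix (Fin 2) (Fin 2) F) - 1) r s ∈ fracIdeal O T a) :
    g ∈ congSubgroup O T a :=
  ⟨mem_GLO_of_det (h.entry_mem ha hg) (h.det_unit ha hg).2, hg⟩

/-- `g ↦ g - 1` identifies `K_a / K_b` with the `2 × 2` matrices over `T a · O / T b · O`. -/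
lemma relIndex_congSubgroup (h : IsScale O T) {a b : ℤ ×ₗ ℤ} (ha : 0 < a) :
    (congSubgroup O T b).relIndex (congSubgroup O T a)
      = ((fracIdeal O T b).relIndex (fracIdeal O T a)) ^ 4 := by
  let X := fracIdeal O T a ⧸ (fracIdeal O T b).addSubgroupOf (fracIdeal O T a)
  let f : congSubgroup O T a → Fin 2 → Fin 2 → X := fun g r s =>
    QuotientAddGroup.mk ⟨((g : GL (Fin 2) F) - 1 : Matrix (Fin 2) (Fin 2) F) r s, g.2.2 r s⟩
  have hcard := relIndex_eq_card (congSubgroup O T b) (congSubgroup O T a) f ?_ ?_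
  · rw [hcard, Nat.card_fun, Nat.card_fun, Nat.card_fin, ← pow_mul]
    rfl
  · intro m
    choose y hy using fun r s => QuotientAddGroup.mk_surjective (m r s)
    let M : Matrix (Fin 2) (Fin 2) F := 1 + Matrix.of fun r s => (y r s : F)
    have hM1 : M - 1 = Matrix.of fun r s => (y r s : F) := by simp [M]
    have hM : ∀ r s, (M - 1) r s ∈ fracIdeal O T a := by
      intro r s; rw [hM1]; exact (y r s).2
    let g := Matrix.GeneralLinearGroup.mkOfDetNeZero M (h.det_unit ha hM).1
    have hg : g ∈ congSubgroup O T a := h.mem_congSubgroup_of_pos ha hM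
    refine ⟨⟨g, hg⟩, ?_⟩
    funext r s
    rw [← hy r s]
    refine congrArg QuotientAddGroup.mk (Subtype.ext ?_)
    exact congrFun (congrFun hM1 r) s
  · intro g k
    rw [inv_mul_mem_congSubgroup g.2.1 k.2.1]
    simp only [funext_iff, f]
    refine forall_congr' fun r => forall_congr' fun s => ?_
    rw [QuotientAddGroup.eq, AddSubgroup.mem_addSubgroupOf]
    refine iff_of_eq (congrArg (· ∈ fracIdeal O T b) ?_)
    simp only [AddSubgroup.coe_add, AddSubgroup.coe_neg, Matrix.sub_apply]
    ring

/-- Reduction modulo the maximal ideal identifies `GL₂(O) / K_{1,0}` with `GL₂` of the residue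
field. -/
lemma relIndex_congSubgroup_zero (h : IsScale O T) :
    (congSubgroup O T eOne).relIndex (congSubgroup O T 0)
      = Nat.card (GL (Fin 2) (IsLocalRing.ResidueField O)) := by
  have hlift : ∀ g : congSubgroup O T 0, ∃ y : GL (Fin 2) O,
      ∀ r s, ((y : Matrix (Fin 2) (Fin 2) O) r s : F)
        = ((g : GL (Fin 2) F) : Matrix (Fin 2) (Fin 2) F) r s := by
    rintro ⟨g, ⟨hg, hg'⟩, -⟩
    have hsub : Function.Injective (O.subtype.mapMatrix (m := Fin 2)) :=
      Matrix.map_injective Subtype.val_injective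
    refine ⟨⟨Matrix.of fun r s => ⟨_, hg r s⟩, Matrix.of fun r s => ⟨_, hg' r s⟩, ?_, ?_⟩,
      fun r s => rfl⟩
    · apply hsub
      rw [map_mul, map_one]
      exact Units.mul_inv g
    · apply hsub
      rw [map_mul, map_one]
      exact Units.inv_mul g
  choose y hy using hlift
  refine relIndex_eq_card _ _
    (fun g => Matrix.GeneralLinearGroup.map (IsLocalRing.residue O) (y g)) ?_ ?_
  · intro m
    choose c hc using fun r s => IsLocalRing.residue_surjective (R := O)
      ((m : Matrix (Fin 2) (Fin 2) (IsLocalRing.ResidueField O)) r s)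
    let C : Matrix (Fin 2) (Fin 2) O := Matrix.of c
    have hC : (IsLocalRing.residue O).mapMatrix C = m := by
      ext r s; exact hc r s
    have hdet : IsUnit C.det := by
      have : IsUnit (IsLocalRing.residue O C.det) := by
        rw [RingHom.map_det, hC]
        exact (Matrix.isUnit_iff_isUnit_det _).1 m.isUnit
      exact (isUnit_map_iff (IsLocalRing.residue O) _).1 this
    let u : GL (Fin 2) O := ((Matrix.isUnit_iff_isUnit_det C).2 hdet).unit
    have hu : (u : Matrix (Fin 2) (Fin 2) O) = C := IsUnit.unit_spec _
    let g : GL (Fin 2) F := Matrix.GeneralLinearGroup.map O.subtype u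
    have hg : g ∈ (congSubgroup O T 0 : Set (GL (Fin 2) F)) := by
      rw [h.coe_congSubgroup_zero]
      refine ⟨fun r s => ((u : Matrix (Fin 2) (Fin 2) O) r s).2, fun r s => ?_⟩
      rw [← map_inv]
      exact (((u⁻¹ : GL (Fin 2) O) : Matrix (Fin 2) (Fin 2) O) r s).2
    refine ⟨⟨g, hg⟩, ?_⟩
    ext r s
    rw [← hc r s]
    refine congrArg (IsLocalRing.residue O) (Subtype.ext ?_)
    rw [hy]
    change (((u : Matrix (Fin 2) (Fin 2) O) r s : O) : F) = _
    rw [hu]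
    rfl
  · intro g k
    rw [inv_mul_mem_congSubgroup g.2.1 k.2.1, Units.ext_iff, ← Matrix.ext_iff]
    refine forall_congr' fun r => forall_congr' fun s => ?_
    rw [← hy, ← hy, eq_comm]
    change IsLocalRing.residue O _ = IsLocalRing.residue O _ ↔ _
    rw [← sub_eq_zero, ← _root_.map_sub, IsLocalRing.residue_eq_zero_iff, h.mem_maximalIdeal]
    rfl

end IsScale

end Congruence

/-! ### The ring of sets -/

section SetRing

variable {F : Type*} [Field F] {O : Subring F} {t1 t2 : F}

/-- The element `t₁ ^ i * t₂ ^ j` attached to the pair `p = (j, i)`; the coordinates are swapped so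
that the order from the right becomes the usual lexicographic order. -/
def scaleOf (t1 t2 : F) (p : ℤ ×ₗ ℤ) : F := t1 ^ (ofLex p).2 * t2 ^ (ofLex p).1

lemma isScale_scaleOf (v : F → ℤ × ℤ)
    (hv_mul : ∀ x y : F, x ≠ 0 → y ≠ 0 → v (x * y) = v x + v y)
    (hO : ∀ x : F, x ∈ O ↔ x = 0 ∨ RLex (0, 0) (v x))
    (ht1 : t1 ≠ 0) (ht2 : t2 ≠ 0) (hvt1 : v t1 = (1, 0)) (hvt2 : v t2 = (0, 1)) :
    IsScale O (scaleOf t1 t2) := by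
  have hne : ∀ p, scaleOf t1 t2 p ≠ 0 := fun p =>
    mul_ne_zero (zpow_ne_zero _ ht1) (zpow_ne_zero _ ht2)
  let φ : Fˣ →* Multiplicative (ℤ × ℤ) :=
    MonoidHom.mk' (fun u => Multiplicative.ofAdd (v u)) fun a b => by
      rw [Units.val_mul, hv_mul _ _ a.ne_zero b.ne_zero, ofAdd_add]
  have hφ : ∀ u : Fˣ, v u = (φ u).toAdd := fun _ => rfl
  have hpow : ∀ (x : F) (_ : x ≠ 0) (n : ℤ), v (x ^ n) = n • v x := by
    intro x hx n
    have := hφ (Units.mk0 x hx ^ n)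
    rw [map_zpow, toAdd_zpow, ← hφ] at this
    simpa using this
  have hvT : ∀ p, v (scaleOf t1 t2 p) = ((ofLex p).2, (ofLex p).1) := by
    intro p
    rw [scaleOf, hv_mul _ _ (zpow_ne_zero _ ht1) (zpow_ne_zero _ ht2), hpow _ ht1, hpow _ ht2,
      hvt1, hvt2]
    simp
  have hv1 : v 1 = 0 := by
    have := hv_mul 1 1 one_ne_zero one_ne_zero
    simpa using this
  have hvinv : ∀ x : F, x ≠ 0 → v x⁻¹ = - v x := by
    intro x hx
    have := hpow x hx (-1)
    simpa using this
  refine ⟨hne, ?_, ?_, ?_⟩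
  · intro a b
    simp only [scaleOf, ofLex_add, Prod.fst_add, Prod.snd_add, zpow_add₀ ht1, zpow_add₀ ht2]
    ring
  · intro p
    rw [hO, hvT, or_iff_right (hne p), Prod.Lex.le_iff]
    rfl
  · intro x hx
    let p : ℤ ×ₗ ℤ := toLex ((v x).2, (v x).1)
    have hp : v (scaleOf t1 t2 p) = v x := hvT p
    have hu0 : x * (scaleOf t1 t2 p)⁻¹ ≠ 0 := mul_ne_zero hx (inv_ne_zero (hne p))
    have hu : v (x * (scaleOf t1 t2 p)⁻¹) = 0 := by
      rw [hv_mul _ _ hx (inv_ne_zero (hne p)), hvinv _ (hne p), hp, add_neg_cancel]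
    refine ⟨p, x * (scaleOf t1 t2 p)⁻¹, ?_, ?_, ?_⟩
    · rw [hO, hu]; right; right; exact ⟨rfl, le_rfl⟩
    · rw [hO, hvinv _ hu0, hu, neg_zero]; right; right; exact ⟨rfl, le_rfl⟩
    · rw [inv_mul_cancel_right₀ (hne p)]

lemma rlt_iff_pos (i j : ℤ) : RLt (0, 0) (i, j) ↔ 0 < (toLex (j, i) : ℤ ×ₗ ℤ) := by
  rw [Prod.Lex.lt_iff]; rfl

lemma Kmat_eq [IsLocalRing O] (h : IsScale O (scaleOf t1 t2)) {i j : ℤ}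
    (hij : RLt (0, 0) (i, j)) :
    Kmat O t1 t2 i j = (congSubgroup O (scaleOf t1 t2) (toLex (j, i)) : Set (GL (Fin 2) F)) := by
  have key : ∀ g : GL (Fin 2) F, g ∈ Kmat O t1 t2 i j ↔ ∀ r s,
      ((g : Matrix (Fin 2) (Fin 2) F) - 1) r s
        ∈ fracIdeal O (scaleOf t1 t2) (toLex (j, i)) := by
    intro g
    refine forall_congr' fun r => forall_congr' fun s => exists_congr fun c =>
      and_congr_right fun _ => ?_
    exact (sub_eq_iff_eq_add'.symm.trans eq_comm)
  ext g
  rw [key]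
  exact ⟨fun hg => h.mem_congSubgroup_of_pos ((rlt_iff_pos i j).1 hij) hg, fun hg => hg.2⟩

lemma dist2_iff [IsLocalRing O] (h : IsScale O (scaleOf t1 t2)) {D : Set (GL (Fin 2) F)} :
    Dist2 O t1 t2 D ↔ D = ∅ ∨ ∃ (g : GL (Fin 2) F) (a : ℤ ×ₗ ℤ), 0 < a ∧
      D = lmul g (congSubgroup O (scaleOf t1 t2) a : Set (GL (Fin 2) F)) := by
  refine or_congr_right (exists_congr fun g => ⟨?_, ?_⟩)
  · rintro ⟨i, j, hij, rfl⟩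
    exact ⟨toLex (j, i), (rlt_iff_pos i j).1 hij, by rw [Kmat_eq h hij]⟩
  · rintro ⟨a, ha, rfl⟩
    have hij : RLt (0, 0) ((ofLex a).2, (ofLex a).1) := (rlt_iff_pos _ _).2 ha
    exact ⟨(ofLex a).2, (ofLex a).1, hij, by rw [Kmat_eq h hij]; rfl⟩

lemma mem_lmul {G : Type*} [Group G] {g x : G} {A : Set G} : x ∈ lmul g A ↔ g⁻¹ * x ∈ A := by
  constructor
  · rintro ⟨k, hk, rfl⟩; simpa using hk
  · intro hx; exact ⟨g⁻¹ * x, hx, by simp⟩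

lemma lmul_lmul {G : Type*} [Group G] (g k : G) (A : Set G) :
    lmul g (lmul k A) = lmul (g * k) A := by
  ext x; simp only [mem_lmul, _root_.mul_inv_rev, mul_assoc]

lemma lmul_inter_lmul {G : Type*} [Group G] {A B : Subgroup G} (hBA : B ≤ A) (g k : G) :
    lmul g (A : Set G) ∩ lmul k (B : Set G) = ∅ ∨
      lmul g (A : Set G) ∩ lmul k (B : Set G) = lmul k (B : Set G) := by
  rcases (lmul g (A : Set G) ∩ lmul k (B : Set G)).eq_empty_or_nonempty with h | ⟨x, hx, hx'⟩
  · exact Or.inl h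
  · right
    refine Set.inter_eq_right.2 fun y hy => ?_
    rw [mem_lmul, SetLike.mem_coe] at *
    have : g⁻¹ * y = g⁻¹ * x * ((k⁻¹ * x)⁻¹ * (k⁻¹ * y)) := by group
    rw [this]
    exact A.mul_mem hx (hBA (B.mul_mem (B.inv_mem hx') hy))

lemma dist2_inter [IsLocalRing O] (h : IsScale O (scaleOf t1 t2)) {D E : Set (GL (Fin 2) F)}
    (hD : Dist2 O t1 t2 D) (hE : Dist2 O t1 t2 E) : Dist2 O t1 t2 (D ∩ E) := by
  rcases (dist2_iff h).1 hD with rfl | ⟨g, a, ha, rfl⟩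
  · rw [Set.empty_inter]; exact Or.inl rfl
  rcases (dist2_iff h).1 hE with rfl | ⟨k, b, hb, rfl⟩
  · rw [Set.inter_empty]; exact Or.inl rfl
  rcases le_total a b with hab | hab
  · rcases lmul_inter_lmul (h.antitone_congSubgroup hab) g k with e | e <;> rw [e]
    exacts [Or.inl rfl, hE]
  · rw [Set.inter_comm]
    rcases lmul_inter_lmul (h.antitone_congSubgroup hab) k g with e | e <;> rw [e]
    exacts [Or.inl rfl, hD]

/-- The real functions on `GL₂(F)` spanned by the indicators of distinguished sets. -/
def stepSpace (O : Subring F) (t1 t2 : F) : Submodule ℝ (GL (Fin 2) F → ℝ) :=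
  Submodule.span ℝ {f | ∃ D, Dist2 O t1 t2 D ∧ f = D.indicator 1}

lemma stepSpace_mul_mem [IsLocalRing O] (h : IsScale O (scaleOf t1 t2))
    {f f' : GL (Fin 2) F → ℝ} (hf : f ∈ stepSpace O t1 t2) (hf' : f' ∈ stepSpace O t1 t2) :
    f * f' ∈ stepSpace O t1 t2 := by
  have := Submodule.mul_mem_mul hf hf'
  rw [stepSpace, Submodule.span_mul_span] at this
  refine Submodule.span_mono ?_ this
  rintro _ ⟨_, ⟨D, hD, rfl⟩, _, ⟨E, hE, rfl⟩, rfl⟩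
  refine ⟨D ∩ E, dist2_inter h hD hE, ?_⟩
  simp only
  rw [Set.inter_indicator_one]

lemma indicator_mem_stepSpace [IsLocalRing O] (h : IsScale O (scaleOf t1 t2))
    {A : Set (GL (Fin 2) F)} (hA : RMem O t1 t2 A) :
    A.indicator 1 ∈ stepSpace O t1 t2 := by
  classical
  induction hA with
  | dist D hD => exact Submodule.subset_span ⟨D, hD, rfl⟩
  | union A B _ _ ihA ihB =>
    have : (A ∪ B).indicator (1 : GL (Fin 2) F → ℝ)
        = A.indicator 1 + B.indicator 1 - A.indicator 1 * B.indicator 1 := by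
      funext x
      by_cases hxA : x ∈ A <;> by_cases hxB : x ∈ B <;> simp [hxA, hxB]
    rw [this]
    exact sub_mem (add_mem ihA ihB) (stepSpace_mul_mem h ihA ihB)
  | inter A B _ _ ihA ihB =>
    rw [Set.inter_indicator_one]
    exact stepSpace_mul_mem h ihA ihB
  | diff A B _ _ ihA ihB =>
    have : (A \ B).indicator (1 : GL (Fin 2) F → ℝ)
        = A.indicator 1 - A.indicator 1 * B.indicator 1 := by
      funext x
      by_cases hxA : x ∈ A <;> by_cases hxB : x ∈ B <;> simp [hxA, hxB]
    rw [this]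
    exact sub_mem ihA (stepSpace_mul_mem h ihA ihB)

lemma RMem.lmul_mem (g : GL (Fin 2) F) {A : Set (GL (Fin 2) F)} (hA : RMem O t1 t2 A) :
    RMem O t1 t2 (lmul g A) := by
  induction hA with
  | dist D hD =>
    refine RMem.dist _ ?_
    rcases hD with rfl | ⟨k, i, j, hij, rfl⟩
    · left; simp [lmul]
    · exact Or.inr ⟨g * k, i, j, hij, lmul_lmul _ _ _⟩
  | union A B _ _ ihA ihB =>
    have : lmul g (A ∪ B) = lmul g A ∪ lmul g B := Set.image_union _ _ _
    rw [this]; exact RMem.union _ _ ihA ihB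
  | inter A B _ _ ihA ihB =>
    have : lmul g (A ∩ B) = lmul g A ∩ lmul g B := Set.image_inter (mul_right_injective g)
    rw [this]; exact RMem.inter _ _ ihA ihB
  | diff A B _ _ ihA ihB =>
    have : lmul g (A \ B) = lmul g A \ lmul g B := Set.image_sdiff (mul_right_injective g) _ _
    rw [this]; exact RMem.diff _ _ ihA ihB

lemma RMem.biUnion {κ : Type*} (s : Finset κ) (A : κ → Set (GL (Fin 2) F))
    (hA : ∀ k, RMem O t1 t2 (A k)) : RMem O t1 t2 (⋃ k ∈ s, A k) := by
  classical
  induction s using Finset.induction_on with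
  | empty => simpa using RMem.dist ∅ (Or.inl rfl)
  | insert k s _ ih =>
    rw [Finset.set_biUnion_insert]
    exact RMem.union _ _ (hA k) ih

/-- `GL₂(O)` is a finite union of left cosets of `K_{1,0}`. -/
lemma rmem_GLO [IsLocalRing O] [Finite (IsLocalRing.ResidueField O)]
    (h : IsScale O (scaleOf t1 t2)) : RMem O t1 t2 (GLO O) := by
  set T := scaleOf t1 t2
  have hne : (congSubgroup O T eOne).relIndex (congSubgroup O T 0) ≠ 0 := by
    rw [h.relIndex_congSubgroup_zero]
    exact Nat.card_pos.ne'
  have : Finite (congSubgroup O T 0 ⧸ (congSubgroup O T eOne).subgroupOf (congSubgroup O T 0)) :=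
    Nat.finite_of_card_ne_zero hne
  have := Fintype.ofFinite
    (congSubgroup O T 0 ⧸ (congSubgroup O T eOne).subgroupOf (congSubgroup O T 0))
  have heq : GLO O = ⋃ z ∈ (Finset.univ : Finset
      (congSubgroup O T 0 ⧸ (congSubgroup O T eOne).subgroupOf (congSubgroup O T 0))),
      lmul (z.out : GL (Fin 2) F) (congSubgroup O T eOne : Set (GL (Fin 2) F)) := by
    rw [← h.coe_congSubgroup_zero]
    ext x
    simp only [Finset.mem_univ, Set.iUnion_true, Set.mem_iUnion, mem_lmul, SetLike.mem_coe]
    constructor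
    · intro hx
      refine ⟨QuotientGroup.mk ⟨x, hx⟩, ?_⟩
      have := QuotientGroup.out_eq' (QuotientGroup.mk ⟨x, hx⟩ :
        congSubgroup O T 0 ⧸ (congSubgroup O T eOne).subgroupOf (congSubgroup O T 0))
      rw [QuotientGroup.eq, Subgroup.mem_subgroupOf] at this
      simpa using this
    · rintro ⟨z, hz⟩
      have := (congSubgroup O T 0).mul_mem z.out.2 (h.antitone_congSubgroup eOne_pos.le hz)
      simpa using this
  rw [heq]
  exact RMem.biUnion _ _ fun z => RMem.dist _ ((dist2_iff h).2 (Or.inr ⟨_, _, eOne_pos, rfl⟩))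

end SetRing

/-! ### The measures of the congruence subgroups -/

section Weights

variable {F : Type*} [Field F] {O : Subring F} {T : ℤ ×ₗ ℤ → F}

/-- The measure of a coset of `K_{i,j}`, for `p = (j, i) > 0`, and of `GL₂(O)`, for `p = 0`. -/
def weight (q : ℕ) (p : ℤ ×ₗ ℤ) : LaurentSeries ℝ :=
  open Classical in
  if p = 0 then 1 else HahnSeries.single (4 * (ofLex p).1)
    ((q : ℝ) ^ 3 / (((q : ℝ) ^ 2 - 1) * ((q : ℝ) - 1)) * (q : ℝ) ^ (-(4 * (ofLex p).2)))

lemma weight_of_pos (q : ℕ) {p : ℤ ×ₗ ℤ} (hp : 0 < p) :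
    weight q p = HahnSeries.single (4 * (ofLex p).1)
      ((q : ℝ) ^ 3 / (((q : ℝ) ^ 2 - 1) * ((q : ℝ) - 1)) * (q : ℝ) ^ (-(4 * (ofLex p).2))) :=
  if_neg hp.ne'

lemma smul_laurent_single (r b : ℝ) (n : ℤ) :
    r • (HahnSeries.single n b : LaurentSeries ℝ) = HahnSeries.single n (r * b) := by
  classical
  ext m
  simp [HahnSeries.coeff_single]

variable [IsLocalRing O] [Finite (IsLocalRing.ResidueField O)]

lemma weight_eq_of_pos (h : IsScale O T) {q : ℕ}
    (hq : Nat.card (IsLocalRing.ResidueField O) = q) {a b : ℤ ×ₗ ℤ} (ha : 0 < a) (hab : a ≤ b)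
    (hn : (congSubgroup O T b).relIndex (congSubgroup O T a) ≠ 0) :
    weight q a = ((congSubgroup O T b).relIndex (congSubgroup O T a) : ℝ) • weight q b := by
  have hq0 : (q : ℝ) ≠ 0 := by rw [← hq]; exact_mod_cast Nat.card_pos.ne'
  rw [h.relIndex_congSubgroup ha] at hn ⊢
  rw [Prod.Lex.le_iff] at hab
  rcases hab with hlt | ⟨h1, h2⟩
  · exact absurd (by rw [h.relIndex_eq_zero hlt]; rfl) hn
  · obtain ⟨n, hbn⟩ := Int.le.dest h2
    have hb : b = a + n • eOne := by
      apply ofLex.injective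
      ext
      · simp [eOne, h1]
      · simp [eOne, hbn]
    have hbpos : 0 < b := ha.trans_le (hb ▸ le_add_of_nonneg_right (nsmul_nonneg eOne_pos.le n))
    rw [weight_of_pos q ha, weight_of_pos q hbpos, ← h1, ← hbn, hb, h.relIndex_nsmul, hq,
      smul_laurent_single]
    congr 1
    have e : (q : ℝ) ^ (-(4 * (ofLex a).2))
        = (q : ℝ) ^ (n * 4) * (q : ℝ) ^ (-(4 * ((ofLex a).2 + (n : ℤ)))) := by
      rw [← zpow_natCast, ← zpow_add₀ hq0]
      congr 1
      push_cast
      ring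
    rw [e]
    push_cast
    rw [← pow_mul]
    ring

/-- `|GL₂(𝔽_q)| · μ(K_{1,0}) = 1`. -/
lemma weight_zero_eq (h : IsScale O T) {q : ℕ}
    (hq : Nat.card (IsLocalRing.ResidueField O) = q) :
    weight q 0 = ((congSubgroup O T eOne).relIndex (congSubgroup O T 0) : ℝ)
      • weight q eOne := by
  have hq1 : 1 < q := by rw [← hq]; exact Finite.one_lt_card
  have hq1' : (1 : ℝ) < q := by exact_mod_cast hq1
  have := Fintype.ofFinite (IsLocalRing.ResidueField O)
  have hcard : (Nat.card (GL (Fin 2) (IsLocalRing.ResidueField O)) : ℝ)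
      = ((q : ℝ) ^ 2 - 1) * ((q : ℝ) ^ 2 - q) := by
    rw [Matrix.card_GL_field, ← Nat.card_eq_fintype_card, hq, Fin.prod_univ_two]
    have l1 : 1 ≤ q ^ 2 := Nat.one_le_pow _ _ (by omega)
    have l2 : q ≤ q ^ 2 := Nat.le_self_pow (by norm_num) q
    simp only [Fin.val_zero, Fin.val_one, pow_zero, pow_one]
    push_cast [Nat.cast_sub l1, Nat.cast_sub l2]
    ring
  rw [h.relIndex_congSubgroup_zero, weight_of_pos q eOne_pos, hcard, smul_laurent_single]
  have h0 : weight q 0 = 1 := if_pos rfl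
  have e1 : 4 * (ofLex eOne).1 = 0 := rfl
  have e2 : -(4 * (ofLex eOne).2) = -4 := rfl
  rw [h0, e1, e2]
  change HahnSeries.single 0 1 = _
  congr 1
  have h1 : (q : ℝ) ^ 2 - 1 ≠ 0 := by nlinarith
  have h2 : (q : ℝ) - 1 ≠ 0 := by linarith
  have h3 : (q : ℝ) ≠ 0 := by linarith
  have h4 : (q : ℝ) ^ (-4 : ℤ) = ((q : ℝ) ^ 4)⁻¹ := by
    rw [_root_.zpow_neg]; norm_cast
  rw [h4]
  field_simp

lemma weight_eq (h : IsScale O T) {q : ℕ}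
    (hq : Nat.card (IsLocalRing.ResidueField O) = q) {a b : ℤ ×ₗ ℤ} (ha : 0 ≤ a) (hab : a ≤ b)
    (hn : (congSubgroup O T b).relIndex (congSubgroup O T a) ≠ 0) :
    weight q a = ((congSubgroup O T b).relIndex (congSubgroup O T a) : ℝ) • weight q b := by
  rcases ha.lt_or_eq with ha | rfl
  · exact weight_eq_of_pos h hq ha hab hn
  rcases hab.lt_or_eq with hb | rfl
  · have hmul := Subgroup.relIndex_mul_relIndex (congSubgroup O T b) (congSubgroup O T eOne)
      (congSubgroup O T 0) (h.antitone_congSubgroup (eOne_le_of_pos hb))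
      (h.antitone_congSubgroup eOne_pos.le)
    rw [← hmul] at hn ⊢
    rw [weight_zero_eq h hq, weight_eq_of_pos h hq eOne_pos (eOne_le_of_pos hb)
      (left_ne_zero_of_mul hn), smul_smul, Nat.cast_mul, mul_comm]
  · simp

end Weights

/-- There exists a finitely additive, left translation-invariant
`ℝ((X))`-valued measure `μ` on the ring `ℛ` of subsets of `GL₂(F)` generated by the
distinguished sets, with `μ(g K_{i,j}) = (q³/((q²−1)(q−1))) q^{−4i} X^{4j}` and
`μ(GL₂(O_F)) = 1`. -/
theorem statement0
    {F : Type*} [Field F] (v : F → ℤ × ℤ)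
    (hv_mul : ∀ x y : F, x ≠ 0 → y ≠ 0 → v (x * y) = v x + v y)
    (hv_add : ∀ x y : F, x ≠ 0 → y ≠ 0 → x + y ≠ 0 →
      RLex (v x) (v (x + y)) ∨ RLex (v y) (v (x + y)))
    (hv_surj : ∀ p : ℤ × ℤ, ∃ x : F, x ≠ 0 ∧ v x = p)
    (O : Subring F) (hO : ∀ x : F, x ∈ O ↔ x = 0 ∨ RLex (0, 0) (v x))
    (t1 t2 : F) (ht1 : t1 ≠ 0) (ht2 : t2 ≠ 0)
    (hvt1 : v t1 = (1, 0)) (hvt2 : v t2 = (0, 1))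
    [IsLocalRing ↥O] [Finite (IsLocalRing.ResidueField ↥O)] (q : ℕ)
    (hq : Nat.card (IsLocalRing.ResidueField ↥O) = q)
    :
    ∃ μ : Set (GL (Fin 2) F) → LaurentSeries ℝ,
      (∀ (g : GL (Fin 2) F) (i j : ℤ), RLt (0, 0) (i, j) →
        μ (lmul g (Kmat O t1 t2 i j))
          = HahnSeries.single (4 * j)
              ((q : ℝ) ^ 3 / (((q : ℝ) ^ 2 - 1) * ((q : ℝ) - 1)) * (q : ℝ) ^ (-(4 * i)))) ∧
      (∀ A B : Set (GL (Fin 2) F), RMem O t1 t2 A → RMem O t1 t2 B → Disjoint A B →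
        μ (A ∪ B) = μ A + μ B) ∧
      (∀ (g : GL (Fin 2) F) (A : Set (GL (Fin 2) F)), RMem O t1 t2 A →
        RMem O t1 t2 (lmul g A) ∧ μ (lmul g A) = μ A) ∧
      RMem O t1 t2 (GLO O) ∧ μ (GLO O) = 1 := by
  have h : IsScale O (scaleOf t1 t2) := isScale_scaleOf v hv_mul hO ht1 ht2 hvt1 hvt2
  obtain ⟨L, hL⟩ := exists_functional
    (fun a : {p : ℤ ×ₗ ℤ // 0 ≤ p} => congSubgroup O (scaleOf t1 t2) a.1)
    (fun a b hab => h.antitone_congSubgroup hab) (fun a => weight q a.1)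
    (fun a b hab hn => weight_eq h hq a.2 hab hn)
  have hL' : ∀ (g : GL (Fin 2) F) (a : ℤ ×ₗ ℤ), 0 ≤ a →
      L ((lmul g (congSubgroup O (scaleOf t1 t2) a : Set (GL (Fin 2) F))).indicator 1)
        = weight q a := fun g a ha => hL g ⟨a, ha⟩
  have hind : ∀ (g : GL (Fin 2) F) (A : Set (GL (Fin 2) F)),
      (lmul g A).indicator (1 : GL (Fin 2) F → ℝ) = fun x => A.indicator 1 (g⁻¹ * x) := by
    intro g A
    classical
    funext x
    simp only [Set.indicator_apply, mem_lmul, Pi.one_apply]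
  -- invariance of `L` on step functions, checked on distinguished sets
  have hinv : ∀ (g : GL (Fin 2) F) (f : GL (Fin 2) F → ℝ), f ∈ stepSpace O t1 t2 →
      L (fun x => f (g⁻¹ * x)) = L f := by
    intro g f hf
    let R : (GL (Fin 2) F → ℝ) →ₗ[ℝ] (GL (Fin 2) F → ℝ) :=
      LinearMap.funLeft ℝ ℝ (fun x => g⁻¹ * x)
    have hEq : Set.EqOn (L.comp R) L {f | ∃ D, Dist2 O t1 t2 D ∧ f = D.indicator 1} := by
      rintro _ ⟨D, hD, rfl⟩
      have e : R (D.indicator 1) = (lmul g D).indicator 1 := (hind g D).symm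
      rw [LinearMap.comp_apply, e]
      rcases (dist2_iff h).1 hD with rfl | ⟨k, a, ha, rfl⟩
      · simp [lmul]
      · rw [lmul_lmul, hL' _ _ ha.le, hL' _ _ ha.le]
    exact LinearMap.eqOn_span hEq hf
  refine ⟨fun A => L (A.indicator 1), ?_, ?_, ?_, rmem_GLO h, ?_⟩
  · intro g i j hij
    have hpos := (rlt_iff_pos i j).1 hij
    simp only [Kmat_eq h hij]
    rw [hL' _ _ hpos.le, weight_of_pos q hpos]
    rfl
  · intro A B _ _ hAB
    simp only
    rw [Set.indicator_union_of_disjoint hAB, ← map_add]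
    rfl
  · intro g A hA
    refine ⟨hA.lmul_mem g, ?_⟩
    simp only
    rw [hind, hinv g _ (indicator_mem_stepSpace h hA)]
  · have h1 : GLO O = lmul 1 (congSubgroup O (scaleOf t1 t2) 0 : Set (GL (Fin 2) F)) := by
      rw [h.coe_congSubgroup_zero]
      simp [lmul]
    simp only
    rw [h1, hL' _ _ le_rfl]
    exact if_pos rfl
end
end

section
/- Let μ : ℛ → ℝ((X)) be finitely additive (μ(A ∪ B) = μ(A) + μ(B) for disjoint A, B ∈ ℛ) and left translation-invariant (μ(gA) = μ(A) for all g ∈ GL_2(F), A ∈ ℛ), and suppose μ(K) = 1. Then for every g ∈ GL_2(F) and every integer i ≥ 1, μ(g K_{i,0}) = (q³/((q²−1)(q−1))) · q^{−4i}; moreover, for every pair (i,j) > (0,0), every integer m ≥ i, and every g ∈ GL_2(F), μ(g K_{i,j}) = q^{4(m−i)} · μ(K_{m,j}). -/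
/-!
The measure of a set which is a disjoint union of `n` left translates of `K_{i,j}` is
`n · mu K_{i,j}` (`mu_index`), so the theorem amounts to computing two indices. The valuation enters
only through two facts: `t₁` generates the maximal ideal `𝔪` of `O`, and `t₁^i t₂^j ∈ 𝔪` whenever
`(i,j) > (0,0)`.

* Reduction `GL₂(O) → GL₂(k)` is surjective with kernel `K_{1,0}`, so
  `[K : K_{1,0}] = |GL₂(k)| = (q² - 1)(q² - q)` (`mu_GLO`). Hence `mu K = 1` determines
  `mu K_{1,0}`.
* With `π = t₁^i t₂^j ∈ 𝔪`, every `1 + π C` with `C ∈ M₂(O)` is invertible over `O`, and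
  `(1 + π C)⁻¹ (1 + π D) = 1 + π (1 + π C)⁻¹ (D - C)` lies in `K_{i+1,j}` iff `C ≡ D` modulo `𝔪`;
  so `[K_{i,j} : K_{i+1,j}] = |M₂(k)| = q⁴` (`mu_step`).

Iterating the second index from `i` to `m` gives the second claim, and iterating it from `1` to `i`
with `j = 0` gives the first.
-/

open Matrix

noncomputable section

/-! ### Additivity and indices -/

/-- Finite additivity over a finite disjoint union. -/
theorem mu_iUnion {F : Type*} [Field F] {O : Subring F} {t1 t2 : F}
    {mu : Set (GL (Fin 2) F) → LaurentSeries ℝ}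
    (hadd : ∀ A B : Set (GL (Fin 2) F), RMem O t1 t2 A → RMem O t1 t2 B → Disjoint A B →
      mu (A ∪ B) = mu A + mu B)
    {X : Type*} (D : X → Set (GL (Fin 2) F)) (hD : ∀ x, RMem O t1 t2 (D x))
    (hdisj : Pairwise fun x y => Disjoint (D x) (D y)) (S : Finset X) :
    RMem O t1 t2 (⋃ x ∈ S, D x) ∧ mu (⋃ x ∈ S, D x) = ∑ x ∈ S, mu (D x) := by
  classical
  have h0 : RMem O t1 t2 (∅ : Set (GL (Fin 2) F)) := RMem.dist _ (Or.inl rfl)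
  induction S using Finset.induction_on with
  | empty =>
    have h := hadd ∅ ∅ h0 h0 (Set.disjoint_empty _)
    simp only [Set.union_empty, left_eq_add] at h
    simpa using ⟨h0, h⟩
  | insert a S ha ih =>
    rw [Finset.set_biUnion_insert, Finset.sum_insert ha, ← ih.2]
    refine ⟨RMem.union _ _ (hD a) ih.1, hadd _ _ (hD a) ih.1 ?_⟩
    rw [Set.disjoint_iUnion₂_right]
    intro x hx
    exact hdisj (fun h => ha (h ▸ hx))

/-- Index formula: if the range of `p : Y → GL₂(F)` is stable under right multiplication by
`K_{i,j}`, and the fibres of the surjection `f : Y → X` correspond to the left cosets of `K_{i,j}`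
in that range, then the range is a disjoint union of `|X|` translates of `K_{i,j}`. -/
theorem mu_index {F : Type*} [Field F] {O : Subring F} {t1 t2 : F}
    {mu : Set (GL (Fin 2) F) → LaurentSeries ℝ}
    (hadd : ∀ A B : Set (GL (Fin 2) F), RMem O t1 t2 A → RMem O t1 t2 B → Disjoint A B →
      mu (A ∪ B) = mu A + mu B)
    (hinv : ∀ (g : GL (Fin 2) F) (A : Set (GL (Fin 2) F)), RMem O t1 t2 A →
      mu (lmul g A) = mu A)
    {i j : ℤ} (hij : RLt (0, 0) (i, j))
    {X Y : Type*} [Finite X] (p : Y → GL (Fin 2) F) (f : Y → X) (hf : Function.Surjective f)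
    (hL : ∀ x y, (p x)⁻¹ * p y ∈ Kmat O t1 t2 i j ↔ f x = f y)
    (hp : ∀ y, ∀ k ∈ Kmat O t1 t2 i j, p y * k ∈ Set.range p) :
    mu (Set.range p) = (Nat.card X : ℝ) • mu (Kmat O t1 t2 i j) := by
  classical
  have := Fintype.ofFinite X
  choose s hs using hf
  have hone : RMem O t1 t2 (Kmat O t1 t2 i j) :=
    RMem.dist _ (Or.inr ⟨1, i, j, hij, by simp [lmul]⟩)
  have hmem : ∀ x y, p y ∈ lmul (p (s x)) (Kmat O t1 t2 i j) ↔ x = f y := by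
    intro x y
    rw [← hs x, ← hL, hs x]
    constructor
    · rintro ⟨k, hk, h⟩
      simpa [← h] using hk
    · intro h
      exact ⟨_, h, by simp⟩
  have hD : ∀ x, RMem O t1 t2 (lmul (p (s x)) (Kmat O t1 t2 i j)) := fun x =>
    RMem.dist _ (Or.inr ⟨_, i, j, hij, rfl⟩)
  have key := (mu_iUnion hadd (fun x => lmul (p (s x)) (Kmat O t1 t2 i j)) hD ?_
    (Finset.univ : Finset X)).2
  · have hU : (⋃ x ∈ (Finset.univ : Finset X), lmul (p (s x)) (Kmat O t1 t2 i j))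
        = Set.range p := by
      ext g
      simp only [Finset.mem_univ, Set.iUnion_true, Set.mem_iUnion]
      constructor
      · rintro ⟨x, k, hk, rfl⟩
        exact hp _ k hk
      · rintro ⟨y, rfl⟩
        exact ⟨f y, (hmem _ _).2 rfl⟩
    rw [hU] at key
    rw [key, Finset.sum_congr rfl (fun x _ => hinv _ _ hone), Finset.sum_const,
      Finset.card_univ, Nat.card_eq_fintype_card]
    exact (Nat.cast_smul_eq_nsmul ℝ _ _).symm
  · intro x x' hxx'
    rw [Set.disjoint_left]
    rintro _ ⟨k, hk, rfl⟩ h2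
    obtain ⟨y, hy⟩ := hp (s x) k hk
    simp only at h2
    rw [← hy] at h2
    have h1 : p y ∈ lmul (p (s x)) (Kmat O t1 t2 i j) := ⟨k, hk, hy.symm⟩
    exact hxx' (((hmem _ _).1 h1).trans ((hmem _ _).1 h2).symm)

/-! ### Matrices over the local ring `O` -/

/-- The inclusion `GL₂(O) → GL₂(F)`. -/
def glIncl {F : Type*} [Field F] (O : Subring F) : GL (Fin 2) O →* GL (Fin 2) F :=
  Matrix.GeneralLinearGroup.map O.subtype

theorem glIncl_apply {F : Type*} [Field F] (O : Subring F) (g : GL (Fin 2) O) (a b : Fin 2) :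
    (glIncl O g : Matrix (Fin 2) (Fin 2) F) a b = ((g : Matrix (Fin 2) (Fin 2) O) a b : F) := rfl

theorem glIncl_injective {F : Type*} [Field F] (O : Subring F) :
    Function.Injective (glIncl O) := by
  intro g h hgh
  ext a b
  rw [← glIncl_apply, ← glIncl_apply, hgh]

theorem range_glIncl {F : Type*} [Field F] (O : Subring F) :
    Set.range (glIncl O) = GLO O := by
  ext g
  constructor
  · rintro ⟨h, rfl⟩
    refine ⟨fun a b => ?_, fun a b => ?_⟩
    · rw [glIncl_apply]; exact Subtype.property _
    · rw [← map_inv, glIncl_apply]; exact Subtype.property _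
  · rintro ⟨h1, h2⟩
    have hi : Function.Injective (fun M : Matrix (Fin 2) (Fin 2) O => M.map O.subtype) :=
      Matrix.map_injective Subtype.val_injective
    refine ⟨⟨Matrix.of fun a b => ⟨_, h1 a b⟩, Matrix.of fun a b => ⟨_, h2 a b⟩, ?_, ?_⟩, ?_⟩
    · apply hi
      simp only [Matrix.map_mul]
      simp only [Matrix.map_one _ (map_zero _) (map_one _)]
      exact g.mul_inv
    · apply hi
      simp only [Matrix.map_mul]
      simp only [Matrix.map_one _ (map_zero _) (map_one _)]
      exact g.inv_mul
    · ext a b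
      rfl

/-- If `t₁^i t₂^j` is the value of `π ∈ O`, then an element of `GL₂(O)` lies in `K_{i,j}` iff it
is of the form `1 + π C` with `C ∈ M₂(O)`. -/
theorem glIncl_mem_Kmat {F : Type*} [Field F] (O : Subring F) {t1 t2 : F} {i j : ℤ} (π : O)
    (hπ : (π : F) = t1 ^ i * t2 ^ j) (g : GL (Fin 2) O) :
    glIncl O g ∈ Kmat O t1 t2 i j ↔
      ∃ C : Matrix (Fin 2) (Fin 2) O, (g : Matrix (Fin 2) (Fin 2) O) = 1 + π • C := by
  have h1 : ∀ a b : Fin 2, (1 : Matrix (Fin 2) (Fin 2) F) a b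
      = ((1 : Matrix (Fin 2) (Fin 2) O) a b : F) := by
    intro a b
    simp only [Matrix.one_apply]
    split_ifs <;> simp
  constructor
  · intro h
    choose c hc hc' using h
    refine ⟨Matrix.of fun a b => ⟨c a b, hc a b⟩, ?_⟩
    ext a b
    have := hc' a b
    rw [glIncl_apply, ← hπ, h1] at this
    simpa using this
  · rintro ⟨C, hC⟩ a b
    refine ⟨C a b, Subtype.property _, ?_⟩
    rw [glIncl_apply, hC, ← hπ, h1]
    simp

/-- Every matrix congruent to `1` modulo the maximal ideal is invertible over the local ring. -/
theorem exists_unit_one_add {R : Type*} [CommRing R] [IsLocalRing R] (π : R)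
    (hπ : IsLocalRing.residue R π = 0) (C : Matrix (Fin 2) (Fin 2) R) :
    ∃ g : GL (Fin 2) R, (g : Matrix (Fin 2) (Fin 2) R) = 1 + π • C := by
  have : IsUnit (1 + π • C) := by
    rw [Matrix.isUnit_iff_isUnit_det, ← isUnit_map_iff (IsLocalRing.residue R)]
    simp [Matrix.det_fin_two, hπ]
  exact ⟨this.unit, rfl⟩

/-- `GL₂(R) → GL₂(k)` is surjective for a local ring `R` with residue field `k`: any lift of an
invertible matrix has unit determinant. -/
theorem gl_residue_surjective (R : Type*) [CommRing R] [IsLocalRing R] :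
    Function.Surjective
      (Matrix.GeneralLinearGroup.map (n := Fin 2) (IsLocalRing.residue R)) := by
  intro g
  choose s hs using IsLocalRing.residue_surjective (R := R)
  let M : Matrix (Fin 2) (Fin 2) R := (g : Matrix (Fin 2) (Fin 2) _).map s
  have hM : M.map (IsLocalRing.residue R) = (g : Matrix (Fin 2) (Fin 2) _) := by
    ext a b
    simp [M, hs]
  have : IsUnit M := by
    rw [Matrix.isUnit_iff_isUnit_det, ← isUnit_map_iff (IsLocalRing.residue R), RingHom.map_det,
      RingHom.mapMatrix_apply, hM, ← Matrix.isUnit_iff_isUnit_det]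
    exact g.isUnit
  refine ⟨this.unit, ?_⟩
  ext a b
  exact congrFun (congrFun hM a) b

/-- Matrix version of: `t` generates the maximal ideal. -/
theorem matrix_residue_eq_zero {R : Type*} [CommRing R] [IsLocalRing R] {t : R}
    (ht : ∀ c : R, IsLocalRing.residue R c = 0 ↔ ∃ d, c = t * d)
    (C : Matrix (Fin 2) (Fin 2) R) :
    C.map (IsLocalRing.residue R) = 0 ↔ ∃ D : Matrix (Fin 2) (Fin 2) R, C = t • D := by
  constructor
  · intro h
    have h' : ∀ a b, ∃ d, C a b = t * d := fun a b => (ht _).1 (congrFun (congrFun h a) b)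
    choose d hd using h'
    exact ⟨Matrix.of d, by ext a b; simp [hd a b]⟩
  · rintro ⟨D, rfl⟩
    ext a b
    simpa using (ht (t * D a b)).2 ⟨_, rfl⟩

/-- `K_{i,j}` is contained in `GL₂(O)` once `t₁^i t₂^j` lies in the maximal ideal, because
determinants of its elements are congruent to `1`. -/
theorem Kmat_lift {F : Type*} [Field F] {O : Subring F} [IsLocalRing ↥O] {t1 t2 : F} {i j : ℤ}
    (π : O) (hπ : (π : F) = t1 ^ i * t2 ^ j) (hres : IsLocalRing.residue O π = 0)
    {k : GL (Fin 2) F} (hk : k ∈ Kmat O t1 t2 i j) : ∃ g : GL (Fin 2) O, glIncl O g = k := by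
  choose c hc hc' using hk
  obtain ⟨g, hg⟩ := exists_unit_one_add π hres (Matrix.of fun a b => (⟨c a b, hc a b⟩ : O))
  refine ⟨g, ?_⟩
  ext a b
  rw [glIncl_apply, hg, hc' a b, ← hπ]
  simp only [Matrix.one_apply, Matrix.add_apply, Matrix.smul_apply, Matrix.of_apply]
  split_ifs <;> simp

/-! ### The two indices -/

/-- `[K : K_{1,0}] = |GL₂(k)|`, in terms of `mu`. -/
theorem mu_GLO {F : Type*} [Field F] {O : Subring F} {t1 t2 : F}
    [IsLocalRing ↥O] [Finite (IsLocalRing.ResidueField ↥O)]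
    {mu : Set (GL (Fin 2) F) → LaurentSeries ℝ}
    (hadd : ∀ A B : Set (GL (Fin 2) F), RMem O t1 t2 A → RMem O t1 t2 B → Disjoint A B →
      mu (A ∪ B) = mu A + mu B)
    (hinv : ∀ (g : GL (Fin 2) F) (A : Set (GL (Fin 2) F)), RMem O t1 t2 A →
      mu (lmul g A) = mu A)
    (t : O) (htt : (t : F) = t1)
    (ht : ∀ c : O, IsLocalRing.residue O c = 0 ↔ ∃ d, c = t * d) :
    mu (GLO O) = (Nat.card (GL (Fin 2) (IsLocalRing.ResidueField O)) : ℝ) •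
      mu (Kmat O t1 t2 1 0) := by
  have hπ : (t : F) = t1 ^ (1 : ℤ) * t2 ^ (0 : ℤ) := by rw [zpow_one, zpow_zero, mul_one, htt]
  have h10 : RLt (0, 0) (1, 0) := Or.inr ⟨rfl, by norm_num⟩
  rw [← range_glIncl]
  refine mu_index hadd hinv h10 (glIncl O)
    (Matrix.GeneralLinearGroup.map (IsLocalRing.residue O)) (gl_residue_surjective O) ?_ ?_
  · intro x y
    rw [← map_inv, ← map_mul, glIncl_mem_Kmat O t hπ, ← inv_mul_eq_one (a := _)
      (b := Matrix.GeneralLinearGroup.map (IsLocalRing.residue O) y), ← map_inv, ← map_mul]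
    generalize x⁻¹ * y = z
    have h1 : (∃ C : Matrix (Fin 2) (Fin 2) O, (z : Matrix (Fin 2) (Fin 2) O) = 1 + t • C) ↔
        ∃ C : Matrix (Fin 2) (Fin 2) O, (z : Matrix (Fin 2) (Fin 2) O) - 1 = t • C := by
      simp only [sub_eq_iff_eq_add']
    rw [h1, ← matrix_residue_eq_zero ht, Matrix.map_sub _ (map_sub _),
      Matrix.map_one _ (map_zero _) (map_one _), sub_eq_zero]
    exact (Units.ext_iff (u := Matrix.GeneralLinearGroup.map (IsLocalRing.residue O) z)
      (v := 1)).symm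
  · intro y k hk
    obtain ⟨g, rfl⟩ := Kmat_lift t hπ ((ht t).2 ⟨1, by simp⟩) hk
    exact ⟨y * g, map_mul _ _ _⟩

/-- `[K_{i,j} : K_{i+1,j}] = q⁴`, in terms of `mu`: the cosets are classified by
`1 + π C ↦ C mod 𝔪`. -/
theorem mu_step {F : Type*} [Field F] {O : Subring F} {t1 t2 : F}
    [IsLocalRing ↥O] [Finite (IsLocalRing.ResidueField ↥O)]
    {mu : Set (GL (Fin 2) F) → LaurentSeries ℝ}
    (hadd : ∀ A B : Set (GL (Fin 2) F), RMem O t1 t2 A → RMem O t1 t2 B → Disjoint A B →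
      mu (A ∪ B) = mu A + mu B)
    (hinv : ∀ (g : GL (Fin 2) F) (A : Set (GL (Fin 2) F)), RMem O t1 t2 A →
      mu (lmul g A) = mu A)
    (ht1 : t1 ≠ 0) (t : O) (htt : (t : F) = t1)
    (ht : ∀ c : O, IsLocalRing.residue O c = 0 ↔ ∃ d, c = t * d)
    {i j : ℤ} (hij : RLt (0, 0) (i + 1, j)) (π : O) (hπ : (π : F) = t1 ^ i * t2 ^ j)
    (hπ0 : π ≠ 0) (hres : IsLocalRing.residue O π = 0) :
    mu (Kmat O t1 t2 i j) = ((Nat.card (IsLocalRing.ResidueField O) : ℝ) ^ 4) •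
      mu (Kmat O t1 t2 (i + 1) j) := by
  have hπ' : ((t * π : O) : F) = t1 ^ (i + 1) * t2 ^ j := by
    rw [zpow_add₀ ht1, Subring.coe_mul, hπ, htt, zpow_one]
    ring
  have hres' : IsLocalRing.residue O (t * π) = 0 := by rw [map_mul, hres, mul_zero]
  choose P hP using exists_unit_one_add π hres
  have hcancel : ∀ C D : Matrix (Fin 2) (Fin 2) O, π • C = π • D → C = D := by
    intro C D h
    ext a b
    have := congrFun (congrFun h a) b
    simp only [Matrix.smul_apply, smul_eq_mul] at this
    rw [mul_left_cancel₀ hπ0 this]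
  have hPuniq : ∀ (g : GL (Fin 2) O) C,
      (g : Matrix (Fin 2) (Fin 2) O) = 1 + π • C → g = P C :=
    fun g C h => Units.ext (h.trans (hP C).symm)
  have hrange : Set.range (fun C => glIncl O (P C)) = Kmat O t1 t2 i j := by
    ext k
    constructor
    · rintro ⟨C, rfl⟩
      exact (glIncl_mem_Kmat O π hπ _).2 ⟨C, hP C⟩
    · intro hk
      obtain ⟨g, rfl⟩ := Kmat_lift π hπ hres hk
      obtain ⟨C, hC⟩ := (glIncl_mem_Kmat O π hπ _).1 hk
      exact ⟨C, by rw [hPuniq g C hC]⟩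
  have hcard : (Nat.card (Matrix (Fin 2) (Fin 2) (IsLocalRing.ResidueField O)) : ℝ)
      = (Nat.card (IsLocalRing.ResidueField O) : ℝ) ^ 4 := by
    have := Fintype.ofFinite (IsLocalRing.ResidueField O)
    rw [Matrix, Nat.card_fun, Nat.card_fun]
    simp [← pow_mul]
  rw [← hrange, ← hcard]
  refine mu_index hadd hinv hij (fun C => glIncl O (P C))
    (fun C => C.map (IsLocalRing.residue O)) ?_ ?_ ?_
  · intro M
    choose s hs using IsLocalRing.residue_surjective (R := O)
    exact ⟨M.map s, by ext a b; simp [hs]⟩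
  · intro C D
    rw [← map_inv, ← map_mul, glIncl_mem_Kmat O (t * π) hπ', eq_comm, ← sub_eq_zero,
      ← Matrix.map_sub _ (map_sub _), matrix_residue_eq_zero ht]
    constructor
    · rintro ⟨E, hE⟩
      refine ⟨(P C : Matrix (Fin 2) (Fin 2) O) * E, hcancel _ _ ?_⟩
      have h := congrArg (fun M => (P C : Matrix (Fin 2) (Fin 2) O) * M) hE
      simp only [← Units.val_mul, mul_inv_cancel_left] at h
      rw [hP D, mul_add, mul_one, hP C] at h
      rw [hP C, smul_sub, sub_eq_iff_eq_add']
      rw [add_assoc] at h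
      rw [add_left_cancel h, Matrix.mul_smul, smul_smul, mul_comm π t]
    · rintro ⟨E, hE⟩
      refine ⟨((P C)⁻¹ : GL (Fin 2) O) * E, ?_⟩
      have hD : (P D : Matrix (Fin 2) (Fin 2) O) = P C + (t * π) • E := by
        rw [hP, hP, sub_eq_iff_eq_add'.1 hE, smul_add, smul_smul, mul_comm π t, add_assoc]
      rw [Units.val_mul, hD, mul_add, Matrix.mul_smul, ← Units.val_mul, inv_mul_cancel]
      rfl
  · intro C k hk
    obtain ⟨g, rfl⟩ := Kmat_lift (t * π) hπ' hres' hk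
    obtain ⟨E, hE⟩ := (glIncl_mem_Kmat O (t * π) hπ' _).1 hk
    refine ⟨C + t • ((P C : Matrix (Fin 2) (Fin 2) O) * E), ?_⟩
    simp only
    rw [← map_mul, ← hPuniq (P C * g)]
    rw [Units.val_mul, hE, mul_add, mul_one, Matrix.mul_smul, smul_add, smul_smul, mul_comm π t,
      ← add_assoc, ← hP C]

/-- If `μ` is a finitely additive, left translation-invariant
`ℝ((X))`-valued measure on `ℛ` with `μ(K) = 1`, then
`μ(g K_{i,0}) = (q³/((q²−1)(q−1))) q^{−4i}` for `i ≥ 1`, and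
`μ(g K_{i,j}) = q^{4(m−i)} μ(K_{m,j})` for `(i,j) > (0,0)` and `m ≥ i`. -/
theorem statement3
    {F : Type*} [Field F] (v : F → ℤ × ℤ)
    (hv_mul : ∀ x y : F, x ≠ 0 → y ≠ 0 → v (x * y) = v x + v y)
    (hv_add : ∀ x y : F, x ≠ 0 → y ≠ 0 → x + y ≠ 0 →
      RLex (v x) (v (x + y)) ∨ RLex (v y) (v (x + y)))
    (hv_surj : ∀ p : ℤ × ℤ, ∃ x : F, x ≠ 0 ∧ v x = p)
    (O : Subring F) (hO : ∀ x : F, x ∈ O ↔ x = 0 ∨ RLex (0, 0) (v x))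
    (t1 t2 : F) (ht1 : t1 ≠ 0) (ht2 : t2 ≠ 0)
    (hvt1 : v t1 = (1, 0)) (hvt2 : v t2 = (0, 1))
    [IsLocalRing ↥O] [Finite (IsLocalRing.ResidueField ↥O)] (q : ℕ)
    (hq : Nat.card (IsLocalRing.ResidueField ↥O) = q)
    (mu : Set (GL (Fin 2) F) → LaurentSeries ℝ)
    (hadd : ∀ A B : Set (GL (Fin 2) F), RMem O t1 t2 A → RMem O t1 t2 B → Disjoint A B →
      mu (A ∪ B) = mu A + mu B)
    (hinv : ∀ (g : GL (Fin 2) F) (A : Set (GL (Fin 2) F)), RMem O t1 t2 A →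
      mu (lmul g A) = mu A)
    (hK : mu (GLO O) = 1) :
    (∀ (g : GL (Fin 2) F) (i : ℤ), 1 ≤ i →
      mu (lmul g (Kmat O t1 t2 i 0))
        = HahnSeries.single 0
            ((q : ℝ) ^ 3 / (((q : ℝ) ^ 2 - 1) * ((q : ℝ) - 1)) * (q : ℝ) ^ (-(4 * i)))) ∧
    (∀ (g : GL (Fin 2) F) (i j m : ℤ), RLt (0, 0) (i, j) → i ≤ m →
      mu (lmul g (Kmat O t1 t2 i j))
        = ((q : ℝ) ^ (4 * (m - i))) • mu (Kmat O t1 t2 m j)) := by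
  have hqF : ∀ x : F, x ≠ 0 → v x⁻¹ = - v x := by
    intro x hx
    have h1 := hv_mul 1 1 one_ne_zero one_ne_zero
    have h2 := hv_mul x x⁻¹ hx (inv_ne_zero hx)
    rw [mul_one, left_eq_add] at h1
    rw [mul_inv_cancel₀ hx, h1] at h2
    exact eq_neg_of_add_eq_zero_right h2.symm
  have hv1 : v 1 = 0 := by
    have h1 := hv_mul 1 1 one_ne_zero one_ne_zero
    rwa [mul_one, left_eq_add] at h1
  have hvpow : ∀ x : F, x ≠ 0 → ∀ n : ℤ, v (x ^ n) = n • v x := by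
    intro x hx n
    induction n with
    | zero => simp [hv1]
    | succ n ih =>
      rw [zpow_add_one₀ hx, hv_mul _ _ (zpow_ne_zero _ hx) hx, ih, add_smul, one_smul]
    | pred n ih =>
      rw [zpow_sub_one₀ hx, hv_mul _ _ (zpow_ne_zero _ hx) (inv_ne_zero hx), ih, hqF x hx,
        sub_smul, one_smul, sub_eq_add_neg]
  have hvt : ∀ i j : ℤ, v (t1 ^ i * t2 ^ j) = (i, j) := by
    intro i j
    rw [hv_mul _ _ (zpow_ne_zero _ ht1) (zpow_ne_zero _ ht2), hvpow _ ht1, hvpow _ ht2, hvt1, hvt2]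
    simp
  have ht1O : t1 ∈ O := (hO t1).2 (Or.inr (by rw [hvt1]; exact Or.inr ⟨rfl, by norm_num⟩))
  let t : O := ⟨t1, ht1O⟩
  -- An element has zero residue iff its valuation is `> (0,0)`, i.e. `≥ (1,0)`.
  have ht : ∀ c : O, IsLocalRing.residue O c = 0 ↔ ∃ d, c = t * d := by
    intro c
    rw [IsLocalRing.residue_eq_zero_iff, IsLocalRing.mem_maximalIdeal, mem_nonunits_iff]
    constructor
    · intro hc
      by_cases hc0 : (c : F) = 0
      · exact ⟨0, by ext; simp [hc0]⟩
      have hcv : RLex (0, 0) (v c) := ((hO c).1 c.2).resolve_left hc0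
      have hcv' : ¬ RLex (0, 0) (- v c) := by
        intro h
        apply hc
        have hi : (c : F)⁻¹ ∈ O := (hO _).2 (Or.inr (by rw [hqF _ hc0]; exact h))
        exact IsUnit.of_mul_eq_one ⟨_, hi⟩ (by ext; simp [hc0])
      have hd : t1⁻¹ * (c : F) ∈ O := by
        refine (hO _).2 (Or.inr ?_)
        rw [hv_mul _ _ (inv_ne_zero ht1) hc0, hqF _ ht1, hvt1]
        simp only [RLex, Prod.fst_add, Prod.snd_add, Prod.fst_neg, Prod.snd_neg] at *
        omega
      exact ⟨⟨_, hd⟩, by ext; simp [t, ht1]⟩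
    · rintro ⟨d, rfl⟩ hu
      obtain ⟨e, he⟩ := (isUnit_of_mul_isUnit_left hu).exists_right_inv
      have he' : t1 * (e : F) = 1 := congrArg Subtype.val he
      have hei : (e : F) = t1⁻¹ := eq_inv_of_mul_eq_one_right he'
      have heO := e.2
      rw [hei, hO, hqF _ ht1, hvt1] at heO
      rcases heO with h | h
      · exact inv_ne_zero ht1 h
      · simp [RLex] at h
  have hstep : ∀ i j : ℤ, RLt (0, 0) (i, j) →
      mu (Kmat O t1 t2 i j) = ((q : ℝ) ^ 4) • mu (Kmat O t1 t2 (i + 1) j) := by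
    intro i j hij
    have hπne : t1 ^ i * t2 ^ j ≠ 0 := mul_ne_zero (zpow_ne_zero _ ht1) (zpow_ne_zero _ ht2)
    have hπO : t1 ^ i * t2 ^ j ∈ O := by
      refine (hO _).2 (Or.inr ?_)
      rw [hvt]
      simp only [RLex, RLt] at *
      omega
    have hπO' : t1 ^ (i - 1) * t2 ^ j ∈ O := by
      refine (hO _).2 (Or.inr ?_)
      rw [hvt]
      simp only [RLex, RLt] at *
      omega
    rw [← hq]
    refine mu_step hadd hinv ht1 t rfl ht ?_ ⟨_, hπO⟩ rfl ?_ ?_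
    · simp only [RLt] at *
      omega
    · intro h
      exact hπne (congrArg Subtype.val h)
    · refine (ht _).2 ⟨⟨_, hπO'⟩, ?_⟩
      ext
      simp only [t, Subring.coe_mul, zpow_sub_one₀ ht1]
      field_simp
  have hRM : ∀ i j : ℤ, RLt (0, 0) (i, j) → RMem O t1 t2 (Kmat O t1 t2 i j) := fun i j hij =>
    RMem.dist _ (Or.inr ⟨1, i, j, hij, by simp [lmul]⟩)
  have hq1 : 1 < q := by
    rw [← hq]
    exact Finite.one_lt_card
  have hqR : (1 : ℝ) < q := by exact_mod_cast hq1
  have hq0 : (q : ℝ) ≠ 0 := by positivity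
  have hpow : ∀ i j m : ℤ, RLt (0, 0) (i, j) → i ≤ m →
      mu (Kmat O t1 t2 i j) = ((q : ℝ) ^ (4 * (m - i))) • mu (Kmat O t1 t2 m j) := by
    intro i j m hij him
    induction m, him using Int.leInduction with
    | base => simp
    | succ m him ih =>
      have hmj : RLt (0, 0) (m, j) := by
        simp only [RLt] at *
        omega
      rw [ih, hstep m j hmj, smul_smul, ← zpow_natCast, ← zpow_add₀ hq0]
      congr 2
      push_cast
      ring
  have h10 : RLt (0, 0) (1, 0) := Or.inr ⟨rfl, by norm_num⟩
  have hGL : (Nat.card (GL (Fin 2) (IsLocalRing.ResidueField O)) : ℝ)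
      = ((q : ℝ) ^ 2 - 1) * ((q : ℝ) ^ 2 - q) := by
    have := Fintype.ofFinite (IsLocalRing.ResidueField O)
    rw [Matrix.card_GL_field, ← Nat.card_eq_fintype_card, hq, Fin.prod_univ_two]
    have h1 : 1 ≤ q ^ 2 := Nat.one_le_pow _ _ (by omega)
    have h2 : q ≤ q ^ 2 := Nat.le_self_pow (by norm_num) q
    simp only [Fin.val_zero, Fin.val_one, pow_zero, pow_one]
    push_cast [h1, h2]
    ring
  have hG := mu_GLO hadd hinv t rfl ht
  rw [hK, hGL] at hG
  refine ⟨fun g i hi => ?_, fun g i j m hij him => ?_⟩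
  · have hi0 : RLt (0, 0) (i, 0) := Or.inr ⟨rfl, by simpa using (by omega : 0 < i)⟩
    rw [hinv _ _ (hRM i 0 hi0)]
    rw [hpow 1 0 i h10 hi, smul_smul] at hG
    have h1 : (q : ℝ) ^ 2 - 1 ≠ 0 := by nlinarith
    have h2 : (q : ℝ) - 1 ≠ 0 := by linarith
    have h3 : (q : ℝ) ^ 2 - q ≠ 0 := by nlinarith
    have hc : (q : ℝ) ^ 3 / (((q : ℝ) ^ 2 - 1) * ((q : ℝ) - 1)) * (q : ℝ) ^ (-(4 * i))
        * ((((q : ℝ) ^ 2 - 1) * ((q : ℝ) ^ 2 - q)) * (q : ℝ) ^ (4 * (i - 1))) = 1 := by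
      have e : (q : ℝ) ^ (4 * (i - 1)) = (q : ℝ) ^ (4 * i) / q ^ 4 := by
        rw [mul_sub, zpow_sub₀ hq0]
        norm_cast
      rw [e, _root_.zpow_neg]
      have := zpow_ne_zero (4 * i) hq0
      field_simp
    have hmu := one_smul ℝ (mu (Kmat O t1 t2 i 0))
    rw [← hc, mul_smul, ← hG] at hmu
    rw [← hmu]
    ext n
    simp [HahnSeries.coeff_one, HahnSeries.coeff_single]
  · rw [hinv _ _ (hRM i j hij)]
    exact hpow i j m hij him
end
end
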